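/- arXiv:1501.04185 — 3 statements merged into one kernel-verified Lean document; each statement's English description precedes it below -/
import Mathlib

section
/- Let S(X) denote the number of integers q ≤ X with q ≡ 1 (mod 4) for which the Erdős conjecture holds mod q. Then liminf_{X→∞} S(X)/(X/4) ≥ 0.80. -/
open Filter Topology Finset

/-- `f : ℕ → ℤ` is Erdősian mod `q`: periodic with period `q`, takes values `±1`
off multiples of `q`, and `0` on multiples of `q`. -/
def IsErdosian (q : ℕ) (f : ℕ → ℤ) : Prop :=
  (∀ n : ℕ, 1 ≤ n → f (n + q) = f n) ∧
  (∀ n : ℕ, 1 ≤ n → ¬ q ∣ n → f n = 1 ∨ f n = -1) ∧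
  (∀ n : ℕ, 1 ≤ n → q ∣ n → f n = 0)

/-- The Erdős conjecture is false mod `q`: there is an Erdősian function mod `q`
whose partial sums `∑_{n=1}^N f(n)/n` tend to `0`. -/
def ErdosConjectureFalse (q : ℕ) : Prop :=
  ∃ f : ℕ → ℤ, IsErdosian q f ∧
    Tendsto (fun N : ℕ => ∑ n ∈ Finset.Icc 1 N, (f n : ℝ) / n) atTop (nhds 0)

/-- The Erdős conjecture holds (is true) mod `q`. -/
def ErdosConjectureHolds (q : ℕ) : Prop := ¬ ErdosConjectureFalse q


open NumberField in
lemma bk_siegel (K : Type) [Field K] [NumberField K] : ∃ C : ℝ, 1 ≤ C ∧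
    ∀ (α β : Type) [Fintype α] [Fintype β] (a : Matrix α β (𝓞 K)) (A : ℝ), 1 ≤ A →
      0 < Fintype.card α → 2 * Fintype.card α ≤ Fintype.card β →
      (∀ k l, house ((a k l : 𝓞 K) : K) ≤ A) →
      ∃ ξ : β → 𝓞 K, ξ ≠ 0 ∧ (∀ k, ∑ l, a k l * ξ l = 0) ∧
        ∀ l, house (ξ l : K) ≤ C * (C * Fintype.card β * A) := by
  classical
  have key : ∃ C : ℝ, ∀ (α β : Type) [Fintype α] [Fintype β] (a : Matrix α β (𝓞 K)) (A : ℝ),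
      a ≠ 0 → 0 < Fintype.card α → Fintype.card α < Fintype.card β →
      (∀ k l, house (algebraMap (𝓞 K) K (a k l)) ≤ A) →
      ∃ ξ : β → 𝓞 K, ξ ≠ 0 ∧ Matrix.mulVec a ξ = 0 ∧
        ∀ l, house (ξ l).1 ≤ C * ((C * Fintype.card β * A) ^
          ((Fintype.card α : ℝ) / (Fintype.card β - Fintype.card α))) := by
    exact ⟨_, fun α β _ _ a A ha h1 h2 h3 =>
      house.exists_ne_zero_int_vec_house_le K a ha h1 h2 rfl h3 rfl⟩
  obtain ⟨C, hC⟩ := key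
  refine ⟨max 1 |C|, le_max_left _ _, ?_⟩
  intro α β _ _ a A hA h1 h2 h3
  have hq1 : (1:ℝ) ≤ Fintype.card β := by exact_mod_cast (by omega)
  have hbig : 1 ≤ max 1 |C| * Fintype.card β * A := by
    have : (1:ℝ) ≤ max 1 |C| := le_max_left _ _
    calc (1:ℝ) = 1 * 1 * 1 := by norm_num
      _ ≤ _ := by gcongr
  by_cases ha : a = 0
  · refine ⟨fun _ => 1, ?_, ?_, ?_⟩
    · intro h
      have : Nonempty β := Fintype.card_pos_iff.1 (by omega)
      have := congrFun h this.some
      simp at this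
    · intro k; simp [ha]
    · intro l
      have h1 : house ((1 : 𝓞 K) : K) = 1 := by
        have := house_intCast (K := K) 1
        simpa using this
      rw [h1]
      have : (1:ℝ) ≤ max 1 |C| := le_max_left _ _
      nlinarith
  · obtain ⟨ξ, x1, x2, x3⟩ := hC α β a A ha h1 (by omega) h3
    refine ⟨ξ, x1, fun k => congrFun x2 k, fun l => (x3 l).trans ?_⟩
    have hp : (0:ℝ) < Fintype.card α := by exact_mod_cast h1
    have hpq : (2:ℝ) * Fintype.card α ≤ Fintype.card β := by exact_mod_cast h2
    have he : (Fintype.card α : ℝ) / (Fintype.card β - Fintype.card α) ≤ 1 := by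
      rw [div_le_one (by linarith)]; linarith
    have he0 : 0 ≤ (Fintype.card α : ℝ) / (Fintype.card β - Fintype.card α) :=
      div_nonneg hp.le (by linarith)
    have hX : 0 ≤ (Fintype.card β : ℝ) * A := by positivity
    have h5 : |(C * Fintype.card β * A) ^ ((Fintype.card α : ℝ) / (Fintype.card β - Fintype.card α))|
        ≤ max 1 |C| * Fintype.card β * A := by
      calc _ ≤ |C * Fintype.card β * A| ^ ((Fintype.card α : ℝ) / (Fintype.card β - Fintype.card α)) :=
            Real.abs_rpow_le_abs_rpow _ _
        _ ≤ (max 1 |C| * Fintype.card β * A) ^ ((Fintype.card α : ℝ) / (Fintype.card β - Fintype.card α)) := by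
            apply Real.rpow_le_rpow (by positivity) _ he0
            rw [mul_assoc, abs_mul, abs_of_nonneg hX, mul_assoc]
            gcongr; exact le_max_right _ _
        _ ≤ (max 1 |C| * Fintype.card β * A) ^ (1:ℝ) := Real.rpow_le_rpow_of_exponent_le hbig he
        _ = _ := Real.rpow_one _
    refine (le_abs_self _).trans ?_
    rw [abs_mul]
    exact mul_le_mul (le_max_right _ _) h5 (abs_nonneg _) (by positivity)

open NumberField in
lemma bk_liouville {K : Type} [Field K] [NumberField K] (φ : K →+* ℂ) (x : 𝓞 K) (hx : x ≠ 0)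
    (H : ℝ) (h1 : 1 ≤ H) (hH : house (x : K) ≤ H) :
    1 ≤ ‖φ x‖ * H ^ (Module.finrank ℚ K) := by
  have h2 := norm_norm_le_norm_mul_house_pow (x : K) φ
  have h3 : (1:ℝ) ≤ ‖Algebra.norm ℚ (x:K)‖ := by
    have hz : Algebra.norm ℤ x ≠ 0 := by rwa [Ne, Algebra.norm_eq_zero_iff]
    have hc : Algebra.norm ℚ (x:K) = ((Algebra.norm ℤ x : ℤ) : ℚ) := by
      have := Algebra.coe_norm_int (K := K) x
      exact this.symm
    rw [hc]
    have : ‖(((Algebra.norm ℤ x : ℤ) : ℚ))‖ = |((Algebra.norm ℤ x : ℤ) : ℝ)| := by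
      rw [← Rat.norm_cast_real]; simp
    rw [this]
    exact_mod_cast Int.one_le_abs hz
  have h4 : house (x:K) ^ (Module.finrank ℚ K - 1) ≤ H ^ (Module.finrank ℚ K) :=
    (pow_le_pow_left₀ (house_nonneg _) hH _).trans (pow_le_pow_right₀ h1 (by omega))
  calc (1:ℝ) ≤ _ := h3.trans h2
    _ ≤ _ := by gcongr

/-- factor out zeros -/
lemma bk_factor (l : Multiset ℂ) (f : ℂ → ℂ) (hf : Differentiable ℂ f)
    (h : ∀ a ∈ l, (l.count a : ℕ∞) ≤ analyticOrderAt f a) :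
    ∃ g : ℂ → ℂ, Differentiable ℂ g ∧ ∀ z, f z = (l.map (fun a => z - a)).prod * g z := by
  induction l using Multiset.induction_on generalizing f with
  | empty => exact ⟨f, hf, by simp⟩
  | cons a l ih =>
    have hfa : f a = 0 := by
      apply apply_eq_zero_of_analyticOrderAt_ne_zero
      have := h a (Multiset.mem_cons_self a l)
      rw [Multiset.count_cons_self] at this
      intro h0
      rw [h0] at this
      simp at this
    have hg : Differentiable ℂ (dslope f a) := by
      rw [← differentiableOn_univ] at hf ⊢
      exact (Complex.differentiableOn_dslope Filter.univ_mem).2 hf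
    have hfg : ∀ z, f z = (z - a) * dslope f a z := by
      intro z
      have := sub_smul_dslope f a z
      rw [hfa, sub_zero, smul_eq_mul] at this
      exact this.symm
    obtain ⟨g, g1, g2⟩ := ih (dslope f a) hg (by
      intro b hb
      have h1 := h b (Multiset.mem_cons_of_mem hb)
      have h2 : analyticOrderAt f b = analyticOrderAt (fun z => z - a) b + analyticOrderAt (dslope f a) b := by
        rw [← analyticOrderAt_mul (by fun_prop) (hg.analyticAt b)]
        congr 1; ext z; exact hfg z
      by_cases hba : b = a
      · subst hba
        rw [Multiset.count_cons_self, h2] at h1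
        have : analyticOrderAt (fun z => z - b) b = 1 := analyticOrderAt_id_sub_const_self
        rw [this, Nat.cast_add, add_comm, Nat.cast_one] at h1
        exact (ENat.add_le_add_iff_left (by simp)).1 h1
      · rw [Multiset.count_cons_of_ne hba, h2] at h1
        have : analyticOrderAt (fun z => z - a) b = 0 := analyticOrderAt_id_sub_const_of_ne hba
        rwa [this, zero_add] at h1)
    refine ⟨g, g1, fun z => ?_⟩
    rw [hfg, g2, Multiset.map_cons, Multiset.prod_cons, mul_assoc]

/-- Schwarz lemma -/
lemma bk_schwarz (f : ℂ → ℂ) (hf : Differentiable ℂ f) (S S' T : ℕ) (hS' : S ≤ S') (hS0 : 0 < S')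
    (h : ∀ s < S, ∀ r < T, iteratedDeriv r f s = 0) (B : ℝ)
    (hB : ∀ z : ℂ, ‖z‖ ≤ 4 * S' → ‖f z‖ ≤ B) (s : ℕ) (hs : s < S') :
    ‖f s‖ ≤ B * (1/3) ^ (T * S) := by
  have hcount : ∀ a : ℂ, (((Finset.range S).val.bind
      (fun j => Multiset.replicate T (j:ℂ))).count a : ℕ∞) ≤ analyticOrderAt f a := by
    intro a
    rw [Multiset.count_bind]
    have e : (Multiset.map (fun b : ℕ => Multiset.count a (Multiset.replicate T (b:ℂ)))
        (Finset.range S).val).sum = ∑ b ∈ Finset.range S, if (b:ℂ) = a then T else 0 := by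
      simp [Finset.sum, Multiset.count_replicate]
    rw [e]
    by_cases ha : ∃ b < S, (b:ℂ) = a
    · obtain ⟨b, hb, rfl⟩ := ha
      simp only [Nat.cast_inj, Finset.sum_ite_eq', Finset.mem_range, hb, if_true]
      exact (natCast_le_analyticOrderAt_iff_iteratedDeriv_eq_zero (hf.analyticAt _)).2
        (fun r hr => h b hb r hr)
    · push Not at ha
      rw [Finset.sum_eq_zero (fun b hb => if_neg (ha b (Finset.mem_range.1 hb)))]
      simp
  obtain ⟨g, g1, g2⟩ := bk_factor _ f hf (fun a _ => hcount a)
  have hprod : ∀ z : ℂ, ((((Finset.range S).val.bind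
      (fun j => Multiset.replicate T (j:ℂ)))).map (fun a => z - a)).prod
      = ∏ j ∈ Finset.range S, (z - j) ^ T := by
    intro z
    rw [Multiset.map_bind, Multiset.prod_bind]
    simp [Finset.prod]
  simp_rw [hprod] at g2
  have hS'' : (0:ℝ) < S' := by exact_mod_cast hS0
  have hSS : (S:ℝ) ≤ S' := by exact_mod_cast hS'
  have hB0 : 0 ≤ B := (norm_nonneg _).trans (hB 0 (by simp))
  have hg : ‖g s‖ ≤ B / (3 * S') ^ (T * S) := by
    apply Complex.norm_le_of_forall_mem_frontier_norm_le (U := Metric.ball (0:ℂ) (4 * S'))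
      Metric.isBounded_ball g1.diffContOnCl
    · intro z hz
      rw [frontier_ball (0:ℂ) (by positivity), mem_sphere_zero_iff_norm] at hz
      rw [le_div_iff₀ (by positivity)]
      refine le_trans ?_ (hB z hz.le)
      rw [g2, norm_mul, mul_comm, norm_prod]
      gcongr
      rw [pow_mul]
      calc ((3 * (S':ℝ)) ^ T) ^ S = ∏ j ∈ Finset.range S, (3 * (S':ℝ)) ^ T := by simp
        _ ≤ _ := by
          apply Finset.prod_le_prod
          · intros; positivity
          · intro j hj
            rw [norm_pow]
            gcongr
            have : (j:ℝ) ≤ S := by exact_mod_cast (Finset.mem_range.1 hj).le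
            have h1 := norm_sub_norm_le z (j:ℂ)
            rw [hz, Complex.norm_natCast] at h1
            linarith
    · apply subset_closure
      rw [mem_ball_zero_iff, Complex.norm_natCast]
      have : (s:ℝ) < S' := by exact_mod_cast hs
      linarith
  rw [g2, norm_mul, norm_prod]
  have : ∏ j ∈ Finset.range S, ‖((s:ℂ) - j) ^ T‖ ≤ (S':ℝ) ^ (T * S) := by
    rw [pow_mul]
    calc _ ≤ ∏ j ∈ Finset.range S, (S':ℝ) ^ T := by
          apply Finset.prod_le_prod
          · intros; positivity
          · intro j hj
            rw [norm_pow]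
            gcongr
            have h1 : ((s:ℂ) - j) = (((s:ℝ) - j : ℝ) : ℂ) := by push_cast; rfl
            rw [h1, Complex.norm_real, Real.norm_eq_abs, abs_le]
            have : (j:ℝ) ≤ S := by exact_mod_cast (Finset.mem_range.1 hj).le
            have : (s:ℝ) < S' := by exact_mod_cast hs
            constructor <;> linarith [Nat.cast_nonneg (α := ℝ) j, Nat.cast_nonneg (α := ℝ) s]
      _ = _ := by simp
  calc _ ≤ (S':ℝ) ^ (T * S) * (B / (3 * S') ^ (T * S)) := by gcongr
    _ = _ := by rw [mul_pow, one_div, inv_pow]; field_simp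


lemma bk_iter {Λ : Type} [Fintype Λ] (c ω : Λ → ℂ) (r : ℕ) :
    iteratedDeriv r (fun z : ℂ => ∑ l, c l * Complex.exp (z * ω l)) =
      fun z : ℂ => ∑ l, c l * ω l ^ r * Complex.exp (z * ω l) := by
  induction r with
  | zero => simp
  | succ r ih =>
    rw [iteratedDeriv_succ, ih]
    ext z
    apply HasDerivAt.deriv
    apply HasDerivAt.fun_sum
    intro l _
    have h1 : HasDerivAt (fun z : ℂ => z * ω l) (ω l) z := by
      simpa using (hasDerivAt_id z).mul_const (ω l)
    have := (h1.cexp).const_mul (c l * ω l ^ r)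
    convert! this using 1
    ring

open NumberField in
lemma bk_house_le {K : Type} [Field K] [NumberField K] (x : K) (B : ℝ)
    (h : ∀ σ : K →+* ℂ, ‖σ x‖ ≤ B) : house x ≤ B := by
  have : ∃ σ : K →+* ℂ, house x = ‖σ x‖ := by
    rw [house_eq_sup']
    obtain ⟨σ, _, h⟩ := Finset.exists_mem_eq_sup' (univ_nonempty (α := K →+* ℂ)) (fun φ : K →+* ℂ ↦ ‖φ x‖₊)
    exact ⟨σ, by rw [h]; rfl⟩
  obtain ⟨σ, hσ⟩ := this
  rw [hσ]; exact h σ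

open NumberField in
lemma bk_sum_bound {K : Type} [Field K] [NumberField K] {Λ ι : Type} [Fintype Λ] [Fintype ι]
    (σ : K →+* ℂ) (x : Λ → ι → 𝓞 K) (p : Λ → 𝓞 K) (e : Λ → ℂ)
    (X Y Z P : ℝ) (hX0 : 0 ≤ X)
    (hX : ∀ l i, ‖σ (x l i)‖ ≤ Real.exp X) (hY : ∀ l, ‖e l‖ ≤ Real.exp Y)
    (hP : ∀ l, ‖σ (p l)‖ ≤ Real.exp P) (hZ : (Fintype.card Λ : ℝ) ≤ Real.exp Z)
    (T : ℕ) (m : ι → ℕ) (hm : ∑ i, m i ≤ T) :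
    ‖∑ l, σ (p l) * (∏ i, σ (x l i) ^ m i) * e l‖ ≤ Real.exp (Z + P + T * X + Y) := by
  calc _ ≤ ∑ l : Λ, Real.exp P * Real.exp (T * X) * Real.exp Y := by
        refine norm_sum_le_of_le _ (fun l _ => ?_)
        rw [norm_mul, norm_mul, norm_prod]
        have : ∏ i, ‖σ (x l i) ^ m i‖ ≤ Real.exp (T * X) := by
          calc _ ≤ ∏ i, Real.exp X ^ m i := by
                apply Finset.prod_le_prod
                · intros; positivity
                · intro i _
                  rw [norm_pow]
                  exact pow_le_pow_left₀ (norm_nonneg _) (hX l i) _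
            _ = Real.exp ((∑ i, m i : ℕ) * X) := by
                rw [Finset.prod_pow_eq_pow_sum, ← Real.exp_nat_mul]
            _ ≤ _ := by
                apply Real.exp_le_exp.2
                apply mul_le_mul_of_nonneg_right _ hX0
                exact_mod_cast hm
        gcongr
        · exact hP l
        · exact hY l
    _ = Fintype.card Λ * (Real.exp P * Real.exp (T * X) * Real.exp Y) := by simp
    _ ≤ Real.exp Z * (Real.exp P * Real.exp (T * X) * Real.exp Y) := by gcongr
    _ = _ := by rw [← Real.exp_add, ← Real.exp_add, ← Real.exp_add]; congr 1; ring

open NumberField in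
lemma bk_step {K : Type} [Field K] [NumberField K] (φ : K →+* ℂ) {Λ ι : Type} [Fintype Λ] [Fintype ι]
    (x : Λ → ι → 𝓞 K) (a p : Λ → 𝓞 K) (ω : Λ → ℂ) (u : ι → ℂ)
    (hω : ∀ l, Complex.exp (ω l) = φ (a l)) (hu : ∀ l, ω l = ∑ i, φ (x l i) * u i)
    (X Y Z P : ℝ) (hX0 : 0 ≤ X) (hY0 : 0 ≤ Y) (hZ0 : 0 ≤ Z) (hP0 : 0 ≤ P)
    (hX : ∀ (σ : K →+* ℂ) l i, ‖σ (x l i)‖ ≤ Real.exp X)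
    (hY : ∀ (σ : K →+* ℂ) l, ‖σ (a l)‖ ≤ Real.exp Y)
    (hYω : ∀ l, ‖ω l‖ ≤ Y)
    (hP : ∀ (σ : K →+* ℂ) l, ‖σ (p l)‖ ≤ Real.exp P)
    (hZ : (Fintype.card Λ : ℝ) ≤ Real.exp Z)
    (T S S' : ℕ) (hSS : S ≤ S') (hS0 : 0 < S')
    (hE : ∀ m : ι → ℕ, ∑ i, m i < 2 * T → ∀ s < S, ∑ l, p l * (∏ i, x l i ^ m i) * a l ^ s = 0)
    (hineq : (Module.finrank ℚ K + 1) * (Z + P + T * X + 4 * S' * Y) < T * S) :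
    ∀ m : ι → ℕ, ∑ i, m i < T → ∀ s < S', ∑ l, p l * (∏ i, x l i ^ m i) * a l ^ s = 0 := by
  classical
  intro m hm s hs
  by_contra hne
  set W : ℝ := Z + P + T * X + 4 * S' * Y with hW
  have hval : ∀ (m : ι → ℕ) (s : ℕ),
      φ ((∑ l, p l * (∏ i, x l i ^ m i) * a l ^ s : 𝓞 K) : K) =
      ∑ l, φ (p l) * (∏ i, φ (x l i) ^ m i) * Complex.exp (s * ω l) := by
    intro m s
    simp only [map_sum, map_mul, map_prod, map_pow, Complex.exp_nat_mul, hω]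
  -- vanishing of derivatives
  have hvan : ∀ r : ℕ, ∀ m : ι → ℕ, ∑ i, m i + r < 2 * T → ∀ s < S,
      ∑ l, φ (p l) * (∏ i, φ (x l i) ^ m i) * ω l ^ r * Complex.exp ((s:ℂ) * ω l) = 0 := by
    intro r
    induction r with
    | zero =>
      intro m hm s hs
      have h1 := hval m s
      rw [hE m (by omega) s hs] at h1
      simpa using h1.symm
    | succ r ih =>
      intro m hm s hs
      have h2 : ∀ l, φ (p l) * (∏ i, φ (x l i) ^ m i) * ω l ^ (r+1) * Complex.exp ((s:ℂ) * ω l)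
          = ∑ j, u j * (φ (p l) * (∏ i, φ (x l i) ^ (m + Pi.single j 1 : ι → ℕ) i) * ω l ^ r *
            Complex.exp ((s:ℂ) * ω l)) := by
        intro l
        have h3 : ∀ j, ∏ i, φ (x l i) ^ (m + Pi.single j 1 : ι → ℕ) i = (∏ i, φ (x l i) ^ m i) * φ (x l j) := by
          intro j
          simp only [Pi.add_apply, pow_add, Finset.prod_mul_distrib]
          congr 1
          rw [Finset.prod_eq_single j]
          · simp
          · intro b _ hb; simp [hb]
          · simp
        simp_rw [h3]
        rw [pow_succ]
        nth_rewrite 2 [hu l]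
        rw [Finset.mul_sum, Finset.mul_sum, Finset.sum_mul]
        apply Finset.sum_congr rfl
        intros; ring
      rw [Finset.sum_congr rfl (fun l _ => h2 l), Finset.sum_comm]
      apply Finset.sum_eq_zero
      intro j _
      rw [← Finset.mul_sum, ih (m + Pi.single j 1) _ s hs, mul_zero]
      simp only [Pi.add_apply, Finset.sum_add_distrib, Finset.sum_pi_single', Finset.mem_univ, if_true]
      omega
  set f : ℂ → ℂ := fun z => ∑ l, (φ (p l) * (∏ i, φ (x l i) ^ m i)) * Complex.exp (z * ω l) with hf
  have hfd : Differentiable ℂ f := by fun_prop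
  have hB : ∀ z : ℂ, ‖z‖ ≤ 4 * S' → ‖f z‖ ≤ Real.exp W := by
    intro z hz
    apply bk_sum_bound φ x p (fun l => Complex.exp (z * ω l)) X (4 * S' * Y) Z P hX0 (hX φ) _ (hP φ) hZ T m hm.le
    intro l
    rw [Complex.norm_exp]
    apply Real.exp_le_exp.2
    calc (z * ω l).re ≤ ‖z * ω l‖ := Complex.re_le_norm _
      _ = ‖z‖ * ‖ω l‖ := norm_mul _ _
      _ ≤ _ := by gcongr; exact hYω l
  have h1 := bk_schwarz f hfd S S' T hSS hS0 (by
    intro s hs r hr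
    rw [hf, bk_iter]
    exact hvan r m (by omega) s hs) _ hB s hs
  have h2 := bk_liouville φ _ hne (Real.exp W) (Real.one_le_exp (by positivity)) (by
    apply bk_house_le
    intro σ
    simp only [map_sum, map_mul, map_prod, map_pow]
    refine (bk_sum_bound σ x p (fun l => σ (a l) ^ s) X (S' * Y) Z P hX0 (hX σ) ?_ (hP σ) hZ T m hm.le).trans ?_
    · intro l
      rw [norm_pow, Real.exp_nat_mul]
      calc _ ≤ Real.exp Y ^ s := pow_le_pow_left₀ (norm_nonneg _) (hY σ l) _
        _ ≤ _ := pow_le_pow_right₀ (Real.one_le_exp hY0) hs.le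
    · apply Real.exp_le_exp.2
      rw [hW]
      have : (0:ℝ) ≤ S' * Y := by positivity
      linarith)
  rw [hval] at h2
  have h3 : (1/3 : ℝ) ^ (T * S) ≤ Real.exp (-(T * S)) := by
    have e1 : (1/3 : ℝ) ≤ Real.exp (-1) := by
      rw [Real.exp_neg, one_div]
      apply inv_anti₀ (Real.exp_pos _)
      linarith [Real.exp_one_lt_d9]
    calc (1/3 : ℝ) ^ (T * S) ≤ Real.exp (-1) ^ (T * S) := by gcongr
      _ = _ := by rw [← Real.exp_nat_mul]; push_cast; ring_nf
  have h4 : 1 ≤ Real.exp W * Real.exp (-(T * S)) * Real.exp W ^ (Module.finrank ℚ K) := by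
    refine h2.trans ?_
    gcongr
    refine h1.trans ?_
    gcongr
  rw [← Real.exp_nat_mul, ← Real.exp_add, ← Real.exp_add, Real.one_le_exp_iff] at h4
  linarith


lemma bk_end {R : Type} [CommRing R] [IsDomain R] {Λ ι : Type} [Fintype Λ] [Fintype ι]
    [DecidableEq R] [Nonempty ι]
    (x : Λ → ι → R) (a p : Λ → R) (hx : Function.Injective x) (N : ℕ)
    (hE : ∀ m : ι → ℕ, ∑ i, m i < N → ∀ s < Fintype.card Λ,
      ∑ l, p l * (∏ i, x l i ^ m i) * a l ^ s = 0)
    (hN : ∀ l₀, (univ.filter (fun l => a l = a l₀)).card ≤ N) : p = 0 := by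
  classical
  -- step 1
  have h1 : ∀ l₀, ∀ m : ι → ℕ, ∑ i, m i < N →
      ∑ l ∈ univ.filter (fun l => a l = a l₀), p l * (∏ i, x l i ^ m i) = 0 := by
    intro l₀ m hm
    set Q : Polynomial R := ∏ v ∈ (univ.image a).erase (a l₀), (Polynomial.X - Polynomial.C v) with hQ
    have hdeg : Q.natDegree < Fintype.card Λ := by
      rw [hQ, Polynomial.natDegree_finsetProd_X_sub_C_eq_card, Finset.card_erase_of_mem (by simp)]
      have h2 : (univ.image a).card ≤ Fintype.card Λ := Finset.card_image_le
      have h3 : 0 < (univ.image a).card := Finset.card_pos.2 ⟨a l₀, by simp⟩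
      omega
    have h2 : ∑ l, p l * (∏ i, x l i ^ m i) * Q.eval (a l) = 0 := by
      simp_rw [Polynomial.eval_eq_sum_range' hdeg, Finset.mul_sum]
      rw [Finset.sum_comm]
      apply Finset.sum_eq_zero
      intro s hs
      have := hE m hm s (Finset.mem_range.1 hs)
      calc _ = Q.coeff s * ∑ l, p l * (∏ i, x l i ^ m i) * a l ^ s := by
            rw [Finset.mul_sum]; apply Finset.sum_congr rfl; intros; ring
        _ = 0 := by rw [this, mul_zero]
    have h3 : ∀ l, Q.eval (a l) = if a l = a l₀ then Q.eval (a l₀) else 0 := by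
      intro l
      split_ifs with h
      · rw [h]
      · rw [hQ, Polynomial.eval_prod]
        apply Finset.prod_eq_zero (i := a l)
        · simp [h]
        · simp
    have h4 : Q.eval (a l₀) ≠ 0 := by
      rw [hQ, Polynomial.eval_prod, Finset.prod_ne_zero_iff]
      intro v hv
      have := (Finset.mem_erase.1 hv).1
      simp only [Polynomial.eval_sub, Polynomial.eval_X, Polynomial.eval_C]
      exact sub_ne_zero.2 this.symm
    rw [Finset.sum_congr rfl (fun l _ => by rw [h3 l])] at h2
    simp only [mul_ite, mul_zero] at h2
    rw [← Finset.sum_filter, ← Finset.sum_mul] at h2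
    exact (mul_eq_zero.1 h2).resolve_right h4
  -- step 2
  have h2 : ∀ l₀, ∀ D : List (ι × R), ∀ m : ι → ℕ, ∑ i, m i + D.length < N →
      ∑ l ∈ univ.filter (fun l => a l = a l₀), p l * (∏ i, x l i ^ m i) *
        (D.map (fun d => x l d.1 - d.2)).prod = 0 := by
    intro l₀ D
    induction D with
    | nil => intro m hm; simpa using h1 l₀ m (by simpa using hm)
    | cons d D ih =>
      intro m hm
      rw [List.length_cons] at hm
      have e1 := ih (m + Pi.single d.1 1) (by
        simp only [Pi.add_apply, Finset.sum_add_distrib, Finset.sum_pi_single', Finset.mem_univ, if_true]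
        omega)
      have e2 := ih m (by omega)
      have h3 : ∀ l, ∏ i, x l i ^ (m + Pi.single d.1 1 : ι → ℕ) i = (∏ i, x l i ^ m i) * x l d.1 := by
        intro l
        simp only [Pi.add_apply, pow_add, Finset.prod_mul_distrib]
        congr 1
        rw [Finset.prod_eq_single d.1]
        · simp
        · intro b _ hb; simp [hb]
        · simp
      simp_rw [h3] at e1
      calc _ = (∑ l ∈ univ.filter (fun l => a l = a l₀), p l * ((∏ i, x l i ^ m i) * x l d.1) *
            (D.map (fun d => x l d.1 - d.2)).prod) - d.2 * 
            (∑ l ∈ univ.filter (fun l => a l = a l₀), p l * (∏ i, x l i ^ m i) *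
            (D.map (fun d => x l d.1 - d.2)).prod) := by
            rw [Finset.mul_sum, ← Finset.sum_sub_distrib]
            apply Finset.sum_congr rfl
            intros
            rw [List.map_cons, List.prod_cons]
            ring
        _ = 0 := by rw [e1, e2]; ring
  ext l₀
  have hsep : ∀ l, ∃ i, l ≠ l₀ → x l i ≠ x l₀ i := by
    intro l
    by_cases h : l = l₀
    · exact ⟨Classical.arbitrary ι, fun h' => absurd h h'⟩
    · obtain ⟨i, hi⟩ := Function.ne_iff.1 (hx.ne h)
      exact ⟨i, fun _ => hi⟩
  choose ii hii using hsep
  set Cl := (univ.filter (fun l => a l = a l₀)).erase l₀ with hCl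
  have h3 := h2 l₀ (Cl.toList.map (fun l => (ii l, x l (ii l)))) 0 (by
    have h4 : Cl.card < (univ.filter (fun l => a l = a l₀)).card :=
      Finset.card_erase_lt_of_mem (by simp)
    have := hN l₀
    simp; omega)
  rw [Finset.sum_eq_single_of_mem l₀ (by simp)] at h3
  · simp only [Pi.zero_apply, pow_zero, Finset.prod_const_one, mul_one, List.map_map] at h3
    refine (mul_eq_zero.1 h3).resolve_right ?_
    intro h
    rw [List.prod_eq_zero_iff] at h
    rw [List.mem_map] at h
    obtain ⟨l, hl, h⟩ := h
    have hl' : l ≠ l₀ := (Finset.mem_erase.1 (Finset.mem_toList.1 hl)).1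
    exact hii l hl' (sub_eq_zero.1 h).symm
  · intro l hl hne
    apply mul_eq_zero_of_right
    rw [List.prod_eq_zero_iff, List.mem_map]
    exact ⟨(ii l, x l (ii l)), List.mem_map.2 ⟨l, by simp only [Finset.mem_toList, hCl, Finset.mem_erase]; exact ⟨hne, hl⟩, rfl⟩, by simp⟩


lemma bk_ineq (M L T S S0 g c d n k G : ℝ) (hM1 : 1 ≤ M) (hL : 1 ≤ L) (hT : L * M ^ 2 ≤ T)
    (hS : M ^ 2 ≤ S) (hS0 : S0 ≤ S) (h0 : 0 ≤ S0) (hg0 : 0 ≤ g) (hg : g ≤ 4 * n * M) (hc : 0 ≤ c) (hd : 0 ≤ d)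
    (hn : 0 ≤ n) (hk : 0 ≤ k) (hG : 0 ≤ G)
    (hM : (d + 1) * (8 * n ^ 2 + 2 * c + k * G * (c + 4 * n) + c + (c + 4 * n) + 4 * c) < M) :
    (d + 1) * (n * g + (2 * c + n * g + k * (G * L * M ^ 2) * (c + g) + S0 * (c * L))
      + T * (c + g) + 4 * (M * S) * (c * L)) < T * S := by
  have hM0 : 0 < M := by linarith
  have hL0 : 0 < L := by linarith
  have hS0' : 0 < S := lt_of_lt_of_le (by positivity) hS
  have hT0 : 0 < T := lt_of_lt_of_le (by positivity) hT
  obtain ⟨U, hU⟩ : ∃ U, U = T * S / M := ⟨_, rfl⟩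
  have hUM : U * M = T * S := by rw [hU]; field_simp
  have hU0 : 0 < U := by rw [hU]; positivity
  have hX : c + g ≤ (c + 4 * n) * M := by nlinarith
  have u5 : M * S * L ≤ U := by
    rw [hU, le_div_iff₀ hM0]
    calc M * S * L * M = (L * M ^ 2) * S := by ring
      _ ≤ T * S := by gcongr
  have u3 : L * M ^ 3 ≤ U := by
    refine le_trans ?_ u5
    calc L * M ^ 3 = M * M ^ 2 * L := by ring
      _ ≤ _ := by gcongr
  have u1 : M ≤ U := by
    refine le_trans ?_ u3
    calc M = 1 * (M * 1 ) := by ring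
      _ ≤ L * (M * M ^ 2) := by gcongr; exact one_le_pow₀ hM1
      _ = _ := by ring
  have u2 : S0 * L ≤ U := by
    refine le_trans ?_ u5
    calc S0 * L ≤ S * L := by gcongr
      _ = 1 * S * L := by ring
      _ ≤ _ := by gcongr
  have u4 : T * M ≤ U := by
    rw [hU, le_div_iff₀ hM0]
    calc T * M * M = T * M ^ 2 := by ring
      _ ≤ T * S := by gcongr
  have a1 : n * g ≤ 4 * n ^ 2 * U := by
    calc n * g ≤ n * (4 * n * M) := by gcongr
      _ = 4 * n ^ 2 * M := by ring
      _ ≤ _ := by gcongr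
  have a2 : 2 * c ≤ 2 * c * U := by
    have : 1 ≤ U := hM1.trans u1
    nlinarith
  have a3 : k * (G * L * M ^ 2) * (c + g) ≤ k * G * (c + 4 * n) * U := by
    calc _ ≤ k * (G * L * M ^ 2) * ((c + 4 * n) * M) := by gcongr
      _ = k * G * (c + 4 * n) * (L * M ^ 3) := by ring
      _ ≤ _ := by gcongr
  have a4 : S0 * (c * L) ≤ c * U := by
    calc _ = c * (S0 * L) := by ring
      _ ≤ _ := by gcongr
  have a5 : T * (c + g) ≤ (c + 4 * n) * U := by
    calc _ ≤ T * ((c + 4 * n) * M) := by gcongr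
      _ = (c + 4 * n) * (T * M) := by ring
      _ ≤ _ := by gcongr
  have a6 : 4 * (M * S) * (c * L) ≤ 4 * c * U := by
    calc _ = 4 * c * (M * S * L) := by ring
      _ ≤ _ := by gcongr
  calc _ ≤ (d + 1) * ((8 * n ^ 2 + 2 * c + k * G * (c + 4 * n) + c + (c + 4 * n) + 4 * c) * U) := by
        gcongr; linarith
    _ = ((d + 1) * (8 * n ^ 2 + 2 * c + k * G * (c + 4 * n) + c + (c + 4 * n) + 4 * c)) * U := by ring
    _ < M * U := by gcongr
    _ = _ := by rw [mul_comm, hUM]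

/-- size of classes -/
lemma bk_class {J : Type} [Fintype J] [DecidableEq J] (ℓ : J → ℂ)
    (hind : ∀ c : J → ℤ, ∑ j, (c j : ℂ) * ℓ j = 0 → c = 0) (L : ℕ) (hL : 0 < L)
    (F : Finset (J → Fin L)) (l₀ : J → Fin L) (h0 : l₀ ∈ F)
    (hF : ∀ l ∈ F, ∀ l' ∈ F, ∃ z : ℤ, ∑ j, ((l j : ℕ) : ℂ) * ℓ j =
      ∑ j, ((l' j : ℕ) : ℂ) * ℓ j + z * (2 * Real.pi * Complex.I)) : F.card ≤ L := by
  by_cases h1 : ∃ l' ∈ F, l' ≠ l₀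
  · obtain ⟨l', hl', hne⟩ := h1
    obtain ⟨j, hj⟩ := Function.ne_iff.1 hne
    have : F.card ≤ (univ : Finset (Fin L)).card := by
      apply Finset.card_le_card_of_injOn (fun l => l j) (by simp)
      intro l hl m hm hlm
      simp only at hlm
      obtain ⟨z1, hz1⟩ := hF l hl m hm
      obtain ⟨z2, hz2⟩ := hF l' hl' l₀ h0
      have h2 := hind (fun i => z2 * ((l i : ℤ) - m i) - z1 * ((l' i : ℤ) - l₀ i)) (by
        have e1 : ∑ i, ((z2 * ((l i : ℤ) - m i) - z1 * ((l' i : ℤ) - l₀ i) : ℤ) : ℂ) * ℓ i =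
          z2 * (∑ i, ((l i : ℕ) : ℂ) * ℓ i - ∑ i, ((m i : ℕ) : ℂ) * ℓ i)
          - z1 * (∑ i, ((l' i : ℕ) : ℂ) * ℓ i - ∑ i, ((l₀ i : ℕ) : ℂ) * ℓ i) := by
          rw [← Finset.sum_sub_distrib, ← Finset.sum_sub_distrib, Finset.mul_sum, Finset.mul_sum,
            ← Finset.sum_sub_distrib]
          apply Finset.sum_congr rfl
          intros; push_cast; ring
        rw [e1, hz1, hz2]; ring)
      have h3 := congrFun h2 j
      simp only [hlm, sub_self, mul_zero, zero_sub, Pi.zero_apply, neg_eq_zero, mul_eq_zero] at h3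
      have hz : z1 = 0 := by
        rcases h3 with h | h
        · exact h
        · exfalso; apply hj; apply Fin.ext; omega
      have h4 := hind (fun i => ((l i : ℤ) - m i)) (by
        have e1 : ∑ i, (((l i : ℤ) - m i : ℤ) : ℂ) * ℓ i =
          (∑ i, ((l i : ℕ) : ℂ) * ℓ i - ∑ i, ((m i : ℕ) : ℂ) * ℓ i) := by
          rw [← Finset.sum_sub_distrib]
          apply Finset.sum_congr rfl
          intros; push_cast; ring
        rw [e1, hz1, hz]; simp)
      ext i
      have := congrFun h4 i
      simp only [Pi.zero_apply] at this
      omega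
    simpa using this
  · push Not at h1
    have : F ⊆ {l₀} := fun l hl => Finset.mem_singleton.2 (h1 l hl)
    have := Finset.card_le_card this
    rw [Finset.card_singleton] at this
    omega


open NumberField in
/-- uniform constants -/
lemma bk_const {K : Type} [Field K] [NumberField K] {ι : Type} [Fintype ι]
    (α : Option ι → 𝓞 K) (ℓ : Option ι → ℂ) (b : ℤ) (β : ι → 𝓞 K) (C : ℝ) :
    ∃ c : ℝ, 0 ≤ c ∧ C ≤ Real.exp c ∧
      (∀ L : ℕ, 0 < L → ∀ l : Option ι → Fin L, ∀ σ : K →+* ℂ,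
        (∀ i, ‖σ ((b * ((l (some i) : ℕ) : 𝓞 K) + ((l none : ℕ) : 𝓞 K) * β i : 𝓞 K) : K)‖
          ≤ Real.exp (c + Real.log L)) ∧
        ‖σ ((∏ j, α j ^ (l j : ℕ) : 𝓞 K) : K)‖ ≤ Real.exp (c * L) ∧
        ‖∑ j, ((l j : ℕ) : ℂ) * ℓ j‖ ≤ c * L) := by
  obtain ⟨c0, hc0⟩ : ∃ c0 : ℝ, c0 = 1 + |C| + |(b:ℝ)| + ∑ i, house (β i : K) + ∑ j, house (α j : K)
    + ∑ j, ‖ℓ j‖ := ⟨_, rfl⟩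
  have hβ0 : 0 ≤ ∑ i, house (β i : K) := Finset.sum_nonneg (fun i _ => house_nonneg _)
  have hα0 : 0 ≤ ∑ i, house (α i : K) := Finset.sum_nonneg (fun i _ => house_nonneg _)
  have hℓ0 : 0 ≤ ∑ i, ‖ℓ i‖ := Finset.sum_nonneg (fun i _ => norm_nonneg _)
  have hC := abs_nonneg C
  have hb0 := abs_nonneg (b:ℝ)
  have hc1 : 1 ≤ c0 := by linarith
  have hβ : ∀ (σ : K →+* ℂ) i, ‖σ (β i : K)‖ ≤ c0 - |(b:ℝ)| := by
    intro σ i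
    have h1 := norm_embedding_le_house (β i : K) σ
    have h2 := Finset.single_le_sum (f := fun i => house (β i : K)) (fun i _ => house_nonneg _) (Finset.mem_univ i)
    linarith
  have hα : ∀ (σ : K →+* ℂ) i, ‖σ (α i : K)‖ ≤ Real.exp c0 := by
    intro σ i
    have h1 := norm_embedding_le_house (α i : K) σ
    have h2 := Finset.single_le_sum (f := fun i => house (α i : K)) (fun i _ => house_nonneg _) (Finset.mem_univ i)
    linarith [Real.add_one_le_exp c0]
  obtain ⟨N, hN⟩ : ∃ N : ℕ, N = Fintype.card (Option ι) := ⟨_, rfl⟩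
  have hN1 : (1:ℝ) ≤ N := by
    rw [hN, Fintype.card_option]; push_cast; linarith [Nat.cast_nonneg (α := ℝ) (Fintype.card ι)]
  have hcc : c0 ≤ N * c0 := by nlinarith
  have hexp : c0 ≤ Real.exp (N * c0) := by linarith [Real.add_one_le_exp (N * c0)]
  refine ⟨N * c0, by positivity, ?_, ?_⟩
  · linarith [le_abs_self C]
  intro L hL l σ
  have hL' : (0:ℝ) < L := by exact_mod_cast hL
  have hl : ∀ j, (((l j : ℕ) : ℝ)) ≤ L := fun j => by exact_mod_cast (l j).2.le
  refine ⟨?_, ?_, ?_⟩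
  · intro i
    rw [Real.exp_add, Real.exp_log hL']
    simp only [map_add, map_mul, map_intCast, map_natCast]
    calc _ ≤ |(b:ℝ)| * L + L * (c0 - |(b:ℝ)|) := by
          refine (norm_add_le _ _).trans ?_
          rw [norm_mul, norm_mul, Complex.norm_intCast, Complex.norm_natCast, Complex.norm_natCast]
          gcongr
          · exact (l _).2.le
          · exact (l _).2.le
          · exact hβ σ i
      _ = c0 * L := by ring
      _ ≤ _ := by gcongr
  · simp only [map_prod, map_pow, norm_prod, norm_pow]
    calc _ ≤ ∏ j : Option ι, Real.exp c0 ^ L := by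
          apply Finset.prod_le_prod
          · intros; positivity
          · intro j _
            calc _ ≤ Real.exp c0 ^ (l j : ℕ) := pow_le_pow_left₀ (norm_nonneg _) (hα σ j) _
              _ ≤ _ := pow_le_pow_right₀ (Real.one_le_exp (by linarith)) (l j).2.le
      _ = _ := by
          rw [Finset.prod_const, Finset.card_univ, ← hN, ← Real.exp_nat_mul, ← Real.exp_nat_mul]
          congr 1; ring
  · calc _ ≤ ∑ j, L * ‖ℓ j‖ := by
          refine norm_sum_le_of_le _ (fun j _ => ?_)
          rw [norm_mul, Complex.norm_natCast]
          gcongr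
          exact (l _).2.le
      _ = L * ∑ j, ‖ℓ j‖ := by rw [Finset.mul_sum]
      _ ≤ L * c0 := by gcongr; linarith
      _ ≤ L * (N * c0) := by gcongr
      _ = _ := by ring

open NumberField in
theorem bk_main {K : Type} [Field K] [NumberField K] (φ : K →+* ℂ) {ι : Type} [Fintype ι]
    [DecidableEq ι] [Nonempty ι]
    (α : Option ι → 𝓞 K) (ℓ : Option ι → ℂ) (hα : ∀ j, Complex.exp (ℓ j) = φ (α j))
    (b : ℤ) (hb : b ≠ 0) (β : ι → 𝓞 K)
    (hrel : (b:ℂ) * ℓ none = ∑ i, φ (β i) * ℓ (some i))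
    (hind : ∀ c : Option ι → ℤ, ∑ j, (c j : ℂ) * ℓ j = 0 → c = 0) : False := by
  classical
  obtain ⟨C, hC1, hC⟩ := bk_siegel K
  obtain ⟨c, hc0, hcC, hc⟩ := bk_const α ℓ b β C
  obtain ⟨k, hk⟩ : ∃ k, k = Fintype.card ι := ⟨_, rfl⟩
  obtain ⟨n, hn⟩ : ∃ n, n = k + 1 := ⟨_, rfl⟩
  obtain ⟨J, hJ⟩ : ∃ J, J = 4 * n ^ 2 := ⟨_, rfl⟩
  obtain ⟨d, hd⟩ : ∃ d, d = Module.finrank ℚ K := ⟨_, rfl⟩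
  obtain ⟨M, hM⟩ := exists_nat_gt (max ((2:ℝ) ^ (J * k + 1)) (((d:ℝ) + 1) * (8 * (n:ℝ) ^ 2 + 2 * c + k * 2 ^ J * (c + 4 * n) + c + (c + 4 * n) + 4 * c)))
  have hM2 : 2 ^ (J * k + 1) < M := by
    have := (le_max_left _ _).trans_lt hM
    exact_mod_cast this
  have hM3 := (le_max_right _ _).trans_lt hM
  have hM1 : 1 ≤ M := by have := Nat.one_le_two_pow (n := J * k + 1); omega
  have hM1' : (1:ℝ) ≤ M := by exact_mod_cast hM1
  obtain ⟨L, hL⟩ : ∃ L, L = M ^ (4 * n) := ⟨_, rfl⟩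
  have hL1 : 1 ≤ L := by rw [hL]; exact Nat.one_le_pow _ _ hM1
  have hL1' : (1:ℝ) ≤ L := by exact_mod_cast hL1
  obtain ⟨T, hT⟩ : ∃ T : ℕ → ℕ, ∀ j, T j = 2 ^ (J - j) * L * M ^ 2 := ⟨_, fun _ => rfl⟩
  obtain ⟨S, hS⟩ : ∃ S : ℕ → ℕ, ∀ j, S j = M ^ (2 * n + j) := ⟨_, fun _ => rfl⟩
  have hS1 : ∀ j, 1 ≤ S j := fun j => by rw [hS]; exact Nat.one_le_pow _ _ hM1
  obtain ⟨x, hx⟩ : ∃ x : (Option ι → Fin L) → ι → 𝓞 K, ∀ l i,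
    x l i = b * ((l (some i) : ℕ) : 𝓞 K) + ((l none : ℕ) : 𝓞 K) * β i := ⟨_, fun _ _ => rfl⟩
  obtain ⟨a, ha⟩ : ∃ a : (Option ι → Fin L) → 𝓞 K, ∀ l, a l = ∏ j, α j ^ (l j : ℕ) := ⟨_, fun _ => rfl⟩
  obtain ⟨ω, hω⟩ : ∃ ω : (Option ι → Fin L) → ℂ, ∀ l, ω l = ∑ j, ((l j : ℕ) : ℂ) * ℓ j := ⟨_, fun _ => rfl⟩
  have hexp : ∀ l, Complex.exp (ω l) = φ (a l) := by
    intro l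
    rw [hω, Complex.exp_sum, ha]
    simp only [map_prod, map_pow, Complex.exp_nat_mul, hα]
  have hbC : (b:ℂ) ≠ 0 := by exact_mod_cast hb
  have hu : ∀ l, ω l = ∑ i, φ (x l i) * (ℓ (some i) / b) := by
    intro l
    rw [hω, Fintype.sum_option]
    simp only [hx, map_add, map_mul, map_intCast, map_natCast]
    have : ∀ i, ((b:ℂ) * ((l (some i) : ℕ) : ℂ) + ((l none : ℕ) : ℂ) * φ (β i)) * (ℓ (some i) / b)
        = ((l (some i) : ℕ) : ℂ) * ℓ (some i) + ((l none : ℕ) : ℂ) / b * (φ (β i) * ℓ (some i)) := by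
      intro i; field_simp
    simp_rw [this]
    rw [Finset.sum_add_distrib, ← Finset.mul_sum, ← hrel, add_comm]
    congr 1
    field_simp
  have hxinj : Function.Injective x := by
    intro l l' h
    have h1 : ω l = ω l' := by rw [hu, hu, h]
    have h4 := hind (fun i => ((l i : ℤ) - l' i)) (by
        have e1 : ∑ i, (((l i : ℤ) - l' i : ℤ) : ℂ) * ℓ i = ω l - ω l' := by
          rw [hω, hω, ← Finset.sum_sub_distrib]
          apply Finset.sum_congr rfl
          intros; push_cast; ring
        rw [e1, h1, sub_self])
    ext i
    have := congrFun h4 i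
    simp only [Pi.zero_apply] at this
    omega
  obtain ⟨g, hg⟩ : ∃ g, g = Real.log L := ⟨_, rfl⟩
  have hg0 : 0 ≤ g := by rw [hg]; exact Real.log_nonneg hL1'
  have hgM : g ≤ 4 * n * M := by
    rw [hg, hL]; push_cast; rw [Real.log_pow]; push_cast
    gcongr
    exact (Real.log_le_sub_one_of_pos (by linarith)).trans (by linarith)
  have hX : ∀ (σ : K →+* ℂ) l i, ‖σ (x l i)‖ ≤ Real.exp (c + g) := by
    intro σ l i; rw [hx, hg]; exact (hc L hL1 l σ).1 i
  have hY : ∀ (σ : K →+* ℂ) l, ‖σ (a l)‖ ≤ Real.exp (c * L) := by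
    intro σ l; rw [ha]; exact (hc L hL1 l σ).2.1
  have hYω : ∀ l, ‖ω l‖ ≤ c * L := by
    intro l; rw [hω]; exact (hc L hL1 l φ).2.2
  have hcard : Fintype.card (Option ι → Fin L) = L ^ n := by
    rw [Fintype.card_fun, Fintype.card_option, Fintype.card_fin, hn, hk]
  have hZ : ((Fintype.card (Option ι → Fin L) : ℕ) : ℝ) = Real.exp (n * g) := by
    rw [hcard, hg, Real.exp_nat_mul, Real.exp_log (by linarith)]; push_cast; rfl
  -- Siegel
  obtain ⟨p, hp0, hpE, hpH⟩ := hC ((ι → Fin (T 0)) × Fin (S 0)) (Option ι → Fin L)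
    (fun e l => (∏ i, x l i ^ (e.1 i : ℕ)) * a l ^ (e.2 : ℕ))
    (Real.exp (k * T 0 * (c + g) + S 0 * (c * L))) (Real.one_le_exp (by positivity)) (by
      rw [Fintype.card_prod, Fintype.card_fun, Fintype.card_fin, Fintype.card_fin, hT]
      have := hS1 0
      positivity) (by
      rw [Fintype.card_prod, Fintype.card_fun, Fintype.card_fin, Fintype.card_fin, hcard, hT, hS, ← hk, hL]
      have e1 : 2 * ((2 ^ (J - 0) * M ^ (4 * n) * M ^ 2) ^ k * M ^ (2 * n + 0)) =
        2 ^ (J * k + 1) * M ^ (4 * n * k + 2 * k + 2 * n) := by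
        rw [Nat.sub_zero, Nat.add_zero]; ring
      have e2 : (M ^ (4 * n)) ^ n = M * M ^ (4 * n * k + 2 * k + 2 * n) * M := by
        rw [← pow_mul, ← pow_succ', ← pow_succ]
        congr 1
        rw [hn]; ring
      rw [e1, e2]
      calc _ ≤ M * M ^ (4 * n * k + 2 * k + 2 * n) * 1 := by rw [mul_one]; gcongr
        _ ≤ _ := by gcongr) (by
      intro e l
      apply bk_house_le
      intro σ
      simp only [map_mul, map_prod, map_pow, norm_mul, norm_prod, norm_pow]
      rw [Real.exp_add]
      gcongr
      · calc _ ≤ ∏ i : ι, Real.exp (c + g) ^ (T 0) := by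
              apply Finset.prod_le_prod
              · intros; positivity
              · intro i _
                calc _ ≤ Real.exp (c + g) ^ (e.1 i : ℕ) := pow_le_pow_left₀ (norm_nonneg _) (hX σ l i) _
                  _ ≤ _ := pow_le_pow_right₀ (Real.one_le_exp (by positivity)) (e.1 i).2.le
          _ = _ := by
              rw [Finset.prod_const, Finset.card_univ, ← hk, ← Real.exp_nat_mul, ← Real.exp_nat_mul]
              congr 1; ring
      · calc _ ≤ Real.exp (c * L) ^ (e.2 : ℕ) := pow_le_pow_left₀ (norm_nonneg _) (hY σ l) _
          _ ≤ Real.exp (c * L) ^ (S 0) := pow_le_pow_right₀ (Real.one_le_exp (by positivity)) e.2.2.le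
          _ = _ := by rw [← Real.exp_nat_mul])
  obtain ⟨P, hP⟩ : ∃ P, P = 2 * c + n * g + k * T 0 * (c + g) + S 0 * (c * L) := ⟨_, rfl⟩
  have hP0 : 0 ≤ P := by rw [hP]; positivity
  have hpP : ∀ (σ : K →+* ℂ) l, ‖σ (p l)‖ ≤ Real.exp P := by
    intro σ l
    refine (norm_embedding_le_house _ σ).trans ((hpH l).trans ?_)
    rw [hZ]
    have : Real.exp P = Real.exp c * (Real.exp c * Real.exp (n * g) * Real.exp (k * T 0 * (c + g) + S 0 * (c * L))) := by
      rw [← Real.exp_add, ← Real.exp_add, ← Real.exp_add, hP]; congr 1; ring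
    rw [this]
    gcongr
  have hind : ∀ j ≤ J, ∀ m : ι → ℕ, ∑ i, m i < T j → ∀ s < S j,
      ∑ l, p l * (∏ i, x l i ^ m i) * a l ^ s = 0 := by
    intro j
    induction j with
    | zero =>
      intro _ m hm s hs
      have hm' : ∀ i, m i < T 0 := fun i =>
        (Finset.single_le_sum (f := m) (fun _ _ => Nat.zero_le _) (Finset.mem_univ i)).trans_lt hm
      have := hpE (fun i => ⟨m i, hm' i⟩, ⟨s, hs⟩)
      rw [← this]
      apply Finset.sum_congr rfl
      intros; ring
    | succ j ih =>
      intro hj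
      have hTT : T j = 2 * T (j + 1) := by
        rw [hT, hT]
        have : J - j = (J - (j + 1)) + 1 := by omega
        rw [this, pow_succ]; ring
      have hSS : S (j + 1) = M * S j := by
        rw [hS, hS, ← pow_succ']; congr 1
      apply bk_step φ x a p ω (fun i => ℓ (some i) / b) hexp hu (c + g) (c * L) (n * g) P
        (by positivity) (by positivity) (by positivity) hP0 hX hY hYω hpP hZ.le
        (T (j + 1)) (S j) (S (j + 1)) (by rw [hSS]; exact Nat.le_mul_of_pos_left _ hM1) (hS1 _)
      · rw [← hTT]; exact ih (by omega)
      · have hT0 : ((T 0 : ℕ) : ℝ) = 2 ^ J * L * M ^ 2 := by rw [hT]; push_cast; simp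
        rw [hP, hT0, hSS]
        push_cast
        rw [← hd]
        apply bk_ineq (M:ℝ) L (T (j+1) : ℝ) (S j : ℝ) (S 0 : ℝ) g c d n k (2 ^ J) hM1' hL1' _ _ _
          (by positivity) hg0 hgM hc0 (by positivity) (by positivity) (by positivity) (by positivity) hM3
        · rw [hT]; push_cast
          have : (1:ℝ) ≤ 2 ^ (J - (j+1)) := one_le_pow₀ (by norm_num)
          calc (L:ℝ) * M ^ 2 = 1 * L * M ^ 2 := by ring
            _ ≤ _ := by gcongr
        · rw [hS]; push_cast
          exact pow_le_pow_right₀ hM1' (by omega)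
        · rw [hS, hS]; push_cast
          exact pow_le_pow_right₀ hM1' (by omega)
  apply hp0
  apply bk_end x a p hxinj L
  · intro m hm s hs
    apply hind J le_rfl m _ s
    · rw [hcard, hL] at hs
      refine hs.trans_le ?_
      rw [hS, ← pow_mul]
      apply Nat.pow_le_pow_right hM1
      rw [hJ]; nlinarith
    · refine hm.trans_le ?_
      rw [hT]
      simp only [Nat.sub_self, pow_zero, one_mul]
      exact Nat.le_mul_of_pos_right _ (by positivity)
  · intro l₀
    apply bk_class ℓ (by assumption) L hL1 _ l₀ (by simp)
    intro l hl l' hl'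
    simp only [Finset.mem_filter, Finset.mem_univ, true_and] at hl hl'
    have : Complex.exp (ω l) = Complex.exp (ω l') := by rw [hexp, hexp, hl, hl']
    rw [Complex.exp_eq_exp_iff_exists_int] at this
    obtain ⟨z, hz⟩ := this
    exact ⟨z, by rw [← hω, ← hω]; exact hz⟩

open NumberField in
theorem bk_indep {K : Type} [Field K] [NumberField K] (φ : K →+* ℂ) {J : Type} [Fintype J]
    (v : J → ℂ) (α : J → 𝓞 K) (hα : ∀ j, Complex.exp (v j) = φ (α j))
    (hv : LinearIndependent ℚ v) (c : J → K) (h : ∑ j, φ (c j) * v j = 0) : c = 0 := by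
  classical
  by_contra hc
  obtain ⟨j0, hj0⟩ := Function.ne_iff.mp hc
  simp only [Pi.zero_apply] at hj0
  obtain ⟨b, hb, hbi⟩ := exists_integral_multiples ℤ ℚ
    (Finset.univ.image (fun i : {j // j ≠ j0} => - c i / c j0))
  have hbi' : ∀ i : {j // j ≠ j0}, IsIntegral ℤ (b • (- c i / c j0)) := fun i =>
    hbi _ (Finset.mem_image_of_mem _ (Finset.mem_univ i))
  have hne := hv.ne_zero j0
  have hφ : φ (c j0) ≠ 0 := by simpa using hj0
  rw [Fintype.sum_eq_add_sum_subtype_ne _ j0] at h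
  have hv2 := Fintype.linearIndependent_iff.mp hv
  rcases isEmpty_or_nonempty {j // j ≠ j0} with he | he
  · simp only [Finset.univ_eq_empty, Finset.sum_empty, add_zero, mul_eq_zero] at h
    tauto
  refine bk_main φ (ι := {j // j ≠ j0}) (fun o => α (Equiv.optionSubtypeNe j0 o))
    (fun o => v (Equiv.optionSubtypeNe j0 o)) (fun o => hα _) b hb
    (fun i => ⟨b • (- c i / c j0), hbi' i⟩) ?_ ?_
  · simp only [Equiv.optionSubtypeNe_none, Equiv.optionSubtypeNe_some]
    have h3 : v j0 = ∑ i : {j // j ≠ j0}, (- φ (c i) / φ (c j0)) * v i := by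
      have : φ (c j0) * v j0 = - ∑ i : {j // j ≠ j0}, φ (c i) * v i := by linear_combination h
      rw [← mul_right_inj' hφ, this, Finset.mul_sum, ← Finset.sum_neg_distrib]
      refine Finset.sum_congr rfl fun i _ => ?_
      field_simp
    rw [h3, Finset.mul_sum]
    refine Finset.sum_congr rfl fun i _ => ?_
    change _ = φ (b • (- c i / c j0)) * v i
    simp only [zsmul_eq_mul, map_mul, map_div₀, map_neg, map_intCast]
    ring
  · intro d hd
    have h4 := hv2 (fun j => ((d ((Equiv.optionSubtypeNe j0).symm j) : ℤ) : ℚ)) (by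
      rw [← (Equiv.optionSubtypeNe j0).sum_comp]
      simp only [Equiv.symm_apply_apply]
      simpa only [Algebra.smul_def, eq_ratCast, Rat.cast_intCast] using hd)
    funext o
    have := h4 (Equiv.optionSubtypeNe j0 o)
    simp only [Equiv.symm_apply_apply] at this
    exact_mod_cast this

open NumberField in
theorem bk_conj {K : Type} [Field K] [NumberField K] (φ ψ : K →+* ℂ) {J : Type} [Fintype J]
    (l : J → ℂ) (α : J → 𝓞 K) (hα : ∀ j, Complex.exp (l j) = φ (α j))
    (c : J → K) (h : ∑ j, φ (c j) * l j = 0) : ∑ j, ψ (c j) * l j = 0 := by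
  classical
  obtain ⟨κ, a, ha, hsp, hli⟩ := exists_linearIndependent' ℚ l
  have : Fintype κ := Fintype.ofInjective a ha
  have hr : ∀ k, ∃ r : κ → ℚ, ∑ i, r i • l (a i) = l k := by
    intro k
    have : l k ∈ Submodule.span ℚ (Set.range (l ∘ a)) := by
      rw [hsp]; exact Submodule.subset_span ⟨k, rfl⟩
    simpa using (Submodule.mem_span_range_iff_exists_fun ℚ).mp this
  choose r hr using hr
  have key : ∀ θ : K →+* ℂ, ∑ j, θ (c j) * l j = ∑ i, θ (∑ j, c j * (r j i : K)) * l (a i) := by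
    intro θ
    simp only [map_sum, map_mul, map_ratCast, Finset.sum_mul]
    rw [Finset.sum_comm]
    refine Finset.sum_congr rfl fun j _ => ?_
    conv_lhs => rw [← hr j, Finset.mul_sum]
    refine Finset.sum_congr rfl fun i _ => ?_
    rw [Algebra.smul_def]; simp; ring
  have h0 := bk_indep φ (l ∘ a) (fun i => α (a i)) (fun i => hα _) hli _ ((key φ).symm.trans h)
  rw [key ψ]
  refine Finset.sum_eq_zero fun i _ => ?_
  have := congrFun h0 i
  simp only [Pi.zero_apply] at this
  rw [this]; simp


lemma dr_sum_range (q : ℕ) [NeZero q] (g : ZMod q → ℂ) : ∑ k ∈ range q, g k = ∑ a, g a := by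
  refine Finset.sum_nbij' (fun k => (k : ZMod q)) ZMod.val (by simp) ?_ ?_ (by simp) (by simp)
  · intro a _; simpa using ZMod.val_lt a
  · intro k hk; simpa using ZMod.val_cast_of_lt (by simpa using hk)

lemma dr_bdd (q : ℕ) [NeZero q] (g : ZMod q → ℂ) (hsum : ∑ a, g a = 0) :
    ∃ C : ℝ, 0 ≤ C ∧ ∀ n : ℕ, ‖∑ k ∈ range n, g k‖ ≤ C := by
  have hper : Function.Periodic (fun n : ℕ => ∑ k ∈ range n, g k) q := by
    intro n
    simp only
    rw [add_comm, Finset.sum_range_add, dr_sum_range, hsum, zero_add]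
    simp
  refine ⟨∑ m ∈ range q, ‖∑ k ∈ range m, g k‖, Finset.sum_nonneg fun _ _ => norm_nonneg _, fun n => ?_⟩
  have h1 := hper.map_mod_nat n
  rw [← h1]
  exact Finset.single_le_sum (f := fun m : ℕ => ‖∑ k ∈ range m, g k‖) (fun _ _ => norm_nonneg _)
    (Finset.mem_range.mpr (Nat.mod_lt _ (NeZero.pos q)))

lemma dr_w (i : ℕ) (hi : 1 ≤ i) (s : ℝ) (h1 : 1 ≤ s) (h2 : s ≤ 2) :
    |((i + 1 : ℕ) : ℝ) ^ (-s) - (i:ℝ) ^ (-s)| ≤ 2 / (i:ℝ) ^ 2 := by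
  have hi0 : (1:ℝ) ≤ i := by exact_mod_cast hi
  have hpos : (0:ℝ) < i := by linarith
  push_cast
  have hle : ((i:ℝ) + 1) ^ (-s) ≤ (i:ℝ) ^ (-s) :=
    Real.rpow_le_rpow_of_nonpos hpos (by linarith) (by linarith)
  rw [abs_sub_comm, abs_of_nonneg (by linarith)]
  have e : ((i:ℝ) + 1) ^ (-s) = (i:ℝ) ^ (-s) * ((i:ℝ) / (i + 1)) ^ s := by
    rw [Real.div_rpow hpos.le (by linarith), Real.rpow_neg hpos.le, Real.rpow_neg (by linarith)]
    field_simp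
  have hb : ((i:ℝ) / (i + 1)) ^ (2:ℝ) ≤ ((i:ℝ) / (i + 1)) ^ s :=
    Real.rpow_le_rpow_of_exponent_ge (by positivity) ((div_le_one (by linarith)).2 (by linarith)) h2
  have hc : 1 - 2 / (i:ℝ) ≤ ((i:ℝ) / (i + 1)) ^ (2:ℝ) := by
    rw [Real.rpow_two, div_pow, le_div_iff₀ (by positivity)]
    field_simp
    nlinarith
  have hd : (i:ℝ) ^ (-s) ≤ (i:ℝ)⁻¹ := by
    rw [← Real.rpow_neg_one]
    exact Real.rpow_le_rpow_of_exponent_le hi0 (by linarith)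
  have he : (0:ℝ) ≤ (i:ℝ) ^ (-s) := by positivity
  rw [e]
  calc _ = (i:ℝ) ^ (-s) * (1 - ((i:ℝ) / (i + 1)) ^ s) := by ring
    _ ≤ (i:ℝ) ^ (-s) * (2 / i) := by gcongr; linarith
    _ ≤ (i:ℝ)⁻¹ * (2 / i) := by gcongr
    _ = _ := by field_simp

lemma dr_abel (q : ℕ) [NeZero q] (g : ZMod q → ℂ) (hg0 : g 0 = 0) (hsum : ∑ a, g a = 0) :
    ∃ l, Tendsto (fun N : ℕ => ∑ n ∈ range N, g n / n) atTop (𝓝 l) ∧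
      Tendsto (fun s : ℝ => LSeries (fun n => g n) s) (𝓝[>] 1) (𝓝 l) := by
  obtain ⟨C, hC0, hC⟩ := dr_bdd q g hsum
  set w : ℝ → ℕ → ℂ := fun s n => (((n:ℝ) ^ (-s) : ℝ) : ℂ) with hw
  set t : ℝ → ℕ → ℂ := fun s i => (w s (i + 1) - w s i) * ∑ k ∈ range (i + 1), g k with ht
  have hbd : ∀ s : ℝ, 1 ≤ s → s ≤ 2 → ∀ i, ‖t s i‖ ≤ 2 / (i:ℝ) ^ 2 * C := by
    intro s h1 h2 i
    rcases Nat.eq_zero_or_pos i with rfl | hi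
    · simp [ht, hg0]
    · simp only [ht, hw]
      rw [norm_mul, ← Complex.ofReal_sub, Complex.norm_real]
      gcongr
      · exact dr_w i hi s h1 h2
      · exact hC _
  have hsm : Summable (fun i : ℕ => 2 / (i:ℝ) ^ 2 * C) := by
    have := (Real.summable_one_div_nat_pow (p := 2)).2 (by norm_num)
    convert! (this.mul_left 2).mul_right C using 2
    ring
  have hts : ∀ s : ℝ, 1 ≤ s → s ≤ 2 → Tendsto (fun N : ℕ => ∑ n ∈ range N, w s n * g n) atTop
      (𝓝 (- ∑' i, t s i)) := by
    intro s h1 h2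
    have hS : Summable (t s) := Summable.of_norm_bounded hsm (hbd s h1 h2)
    rw [← tendsto_add_atTop_iff_nat 1]
    have h3 : ∀ N : ℕ, ∑ n ∈ range (N + 1), w s n * g n =
        w s N * ∑ k ∈ range (N + 1), g k - ∑ i ∈ range N, t s i := by
      intro N
      simpa [ht] using Finset.sum_range_by_parts (w s) (fun k : ℕ => g k) (N + 1)
    simp only [h3]
    rw [← zero_sub]
    refine Tendsto.sub ?_ hS.hasSum.tendsto_sum_nat
    have hw0 : Tendsto (fun N : ℕ => w s N) atTop (𝓝 0) := by
      have := (tendsto_rpow_neg_atTop (y := s) (by linarith)).comp (tendsto_natCast_atTop_atTop (R := ℝ))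
      exact_mod_cast (Complex.continuous_ofReal.tendsto 0).comp this
    refine squeeze_zero_norm (a := fun N => ‖w s N‖ * C) (fun N => ?_) ?_
    · rw [norm_mul]; gcongr; exact hC _
    · simpa using hw0.norm.mul_const C
  have hcont : Tendsto (fun s : ℝ => ∑' i, t s i) (𝓝[>] 1) (𝓝 (∑' i, t 1 i)) := by
    refine tendsto_tsum_of_dominated_convergence hsm ?_ ?_
    · intro i
      have hwc : ∀ n : ℕ, Tendsto (fun s => w s n) (𝓝[>] 1) (𝓝 (w 1 n)) := by
        intro n
        refine Tendsto.mono_left ?_ nhdsWithin_le_nhds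
        refine (Complex.continuous_ofReal.tendsto _).comp ?_
        refine (Real.continuousAt_const_rpow' (by norm_num)).tendsto.comp (f := fun s : ℝ => -s) ?_
        exact (continuous_neg.tendsto (1:ℝ))
      exact ((hwc _).sub (hwc _)).mul_const _
    · filter_upwards [Ioo_mem_nhdsGT (show (1:ℝ) < 2 by norm_num)] with s hs i
      exact hbd s hs.1.le hs.2.le i
  refine ⟨- ∑' i, t 1 i, ?_, ?_⟩
  · refine (hts 1 le_rfl (by norm_num)).congr fun N => Finset.sum_congr rfl fun n _ => ?_
    simp only [hw, Real.rpow_neg_one]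
    push_cast; rw [div_eq_inv_mul]
  · refine hcont.neg.congr' ?_
    filter_upwards [Ioo_mem_nhdsGT (show (1:ℝ) < 2 by norm_num)] with s hs
    obtain ⟨D, hD⟩ : ∃ D : ℝ, ∀ a, ‖g a‖ ≤ D :=
      ⟨∑ a, ‖g a‖, fun a => Finset.single_le_sum (f := fun a => ‖g a‖) (fun _ _ => norm_nonneg _) (Finset.mem_univ a)⟩
    have hls : LSeriesSummable (fun n : ℕ => g n) (s:ℂ) :=
      LSeriesSummable_of_bounded_of_one_lt_real (m := D) (fun n _ => hD _) hs.1
    refine tendsto_nhds_unique (hts s hs.1.le hs.2.le) ?_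
    refine hls.LSeriesHasSum.tendsto_sum_nat.congr fun N => Finset.sum_congr rfl fun n _ => ?_
    rcases Nat.eq_zero_or_pos n with rfl | hn
    · simp [hg0]
    · rw [LSeries.term_of_ne_zero hn.ne']
      simp only [hw]
      rw [Real.rpow_neg (by positivity), Complex.ofReal_inv, Complex.ofReal_cpow (by positivity), div_eq_inv_mul]
      simp


lemma dr_norm (q : ℕ) [NeZero q] (χ : AddChar (ZMod q) ℂ) (k : ZMod q) : ‖χ k‖ = 1 := 
  AddChar.norm_apply χ k

lemma dr_log (q : ℕ) [NeZero q] (χ : AddChar (ZMod q) ℂ) (hχ : χ.IsPrimitive) (g : ZMod q → ℂ)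
    (x : ℝ) (h0 : 0 < x) (h1 : x < 1) :
    HasSum (fun n : ℕ => g n / n * (x:ℂ) ^ n)
      (-(1 / q) * ∑ k, (∑ a, g a * χ (-(a * k))) * Complex.log (1 - χ k * x)) := by
  have hq : (q:ℂ) ≠ 0 := by exact_mod_cast NeZero.ne q
  have hs := hasSum_sum (s := Finset.univ) (f := fun (k : ZMod q) (n : ℕ) =>
    (∑ a, g a * χ (-(a * k))) * ((χ k * x) ^ n / n)) (fun k _ =>
      (Complex.hasSum_taylorSeries_neg_log (z := χ k * x) (by
        rw [norm_mul, dr_norm, one_mul, Complex.norm_real, Real.norm_eq_abs, abs_of_pos h0]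
        exact h1)).mul_left (∑ a, g a * χ (-(a * k))))
  have hs2 := hs.mul_left (1 / (q:ℂ))
  convert! hs2 using 1
  · funext n
    have key : ∑ k, (∑ a, g a * χ (-(a * k))) * (χ k) ^ n = q * g n := by
      simp only [Finset.sum_mul]
      rw [Finset.sum_comm]
      have : ∀ a : ZMod q, ∑ k, g a * χ (-(a * k)) * χ k ^ n = if (n : ZMod q) - a = 0 then q * g a else 0 := by
        intro a
        have h2 : ∀ k, g a * χ (-(a * k)) * χ k ^ n = g a * χ (k * ((n : ZMod q) - a)) := by
          intro k
          rw [← AddChar.map_nsmul_eq_pow, mul_assoc, ← AddChar.map_add_eq_mul]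
          congr 2
          rw [nsmul_eq_mul]; ring
        simp only [h2]
        rw [← Finset.mul_sum, AddChar.sum_mulShift _ hχ, ZMod.card]
        split_ifs <;> simp [mul_comm]
      simp only [this, sub_eq_zero]
      simp
    have : ∀ k, (∑ a, g a * χ (-(a * k))) * ((χ k * (x:ℂ)) ^ n / n) = 
      ((∑ a, g a * χ (-(a * k))) * (χ k) ^ n) * ((x:ℂ) ^ n / n) := by intro k; rw [mul_pow]; ring
    simp only [this]
    rw [← Finset.sum_mul, key]
    field_simp
  · simp only [mul_neg, Finset.sum_neg_distrib, neg_mul]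

lemma dr_val (q : ℕ) [NeZero q] (χ : AddChar (ZMod q) ℂ) (hχ : χ.IsPrimitive) (g : ZMod q → ℂ)
    (l : ℂ) (hl : Tendsto (fun N : ℕ => ∑ n ∈ range N, g n / n) atTop (𝓝 l)) :
    ∑ a, g a = 0 ∧ 
    q * l + ∑ k : {k : ZMod q // k ≠ 0}, (∑ a, g a * χ (-(a * k))) * Complex.log (1 - χ k) = 0 := by
  have hq : (q:ℂ) ≠ 0 := by exact_mod_cast NeZero.ne q
  have hab := Complex.tendsto_tsum_powerSeries_nhdsWithin_lt hl
  rw [tendsto_map'_iff] at hab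
  have hmem : Set.Ioo (0:ℝ) 1 ∈ 𝓝[<] (1:ℝ) := Ioo_mem_nhdsLT (by norm_num)
  have hne : ∀ k : {k : ZMod q // k ≠ 0}, χ k ≠ 1 := by
    intro k hk
    refine hχ k.2 ?_
    ext x
    have : (k:ZMod q) * x = x.val • (k : ZMod q) := by
      rw [nsmul_eq_mul, ZMod.natCast_zmod_val, mul_comm]
    rw [AddChar.mulShift_apply, this, AddChar.map_nsmul_eq_pow, hk]
    simp
  have hlog : ∀ k : {k : ZMod q // k ≠ 0}, Tendsto (fun x : ℝ => Complex.log (1 - χ k * x)) (𝓝[<] 1)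
      (𝓝 (Complex.log (1 - χ k))) := by
    intro k
    have hsl : (1 - χ k) ∈ Complex.slitPlane := by
      left
      have h1 := dr_norm q χ k
      have h2 := Complex.re_le_norm (χ k)
      rcases h2.lt_or_eq with h | h
      · simp; linarith
      · exfalso
        apply hne k
        have h3 := Complex.sq_norm (χ k)
        rw [Complex.normSq_apply, h1] at h3
        rw [h1] at h
        apply Complex.ext
        · simpa using h
        · rw [h] at h3; simpa using (by nlinarith : (χ k).im * (χ k).im = 0)
    have hc : ContinuousAt (fun x : ℝ => Complex.log (1 - χ k * x)) 1 := by
      refine ContinuousAt.clog (by fun_prop) (by simpa using hsl)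
    have := hc.tendsto.mono_left (nhdsWithin_le_nhds (s := Set.Iio 1))
    simpa using this
  set A : ℂ := ∑ k : {k : ZMod q // k ≠ 0}, (∑ a, g a * χ (-(a * k))) * Complex.log (1 - χ k) with hA
  have hsum := tendsto_finsetSum (Finset.univ : Finset {k : ZMod q // k ≠ 0}) (fun k _ =>
    (hlog k).const_mul (∑ a, g a * χ (-(a * k))))
  have hfin : Tendsto (fun x : ℝ => (∑ a, g a) * Complex.log (1 - x)) (𝓝[<] 1) (𝓝 (- q * l - A)) := by
    refine ((hab.const_mul (-(q:ℂ))).sub hsum).congr' ?_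
    filter_upwards [hmem] with x hx
    have h5 := (dr_log q χ hχ g x hx.1 hx.2).tsum_eq
    simp only [Function.comp_apply]
    rw [h5, Fintype.sum_eq_add_sum_subtype_ne _ (0 : ZMod q)]
    simp only [mul_zero, neg_zero, AddChar.map_zero_eq_one, mul_one, one_mul]
    field_simp
    ring
  have hlog0 : Tendsto (fun x : ℝ => (Complex.log (1 - x))⁻¹) (𝓝[<] 1) (𝓝 0) := by
    have h6 : Tendsto (fun x : ℝ => 1 - x) (𝓝[<] 1) (𝓝[>] 0) := by
      rw [tendsto_nhdsWithin_iff]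
      constructor
      · have : Tendsto (fun x : ℝ => 1 - x) (𝓝 1) (𝓝 (1 - 1)) := by
          exact (continuous_const.sub continuous_id).tendsto 1
        simpa using this.mono_left nhdsWithin_le_nhds
      · filter_upwards [hmem] with x hx
        simpa using hx.2
    have h7 := (tendsto_inv_atBot_zero.comp Real.tendsto_log_nhdsGT_zero).comp h6
    have h8 := (Complex.continuous_ofReal.tendsto 0).comp h7
    rw [Complex.ofReal_zero] at h8
    refine h8.congr' ?_
    filter_upwards [hmem] with x hx
    simp only [Function.comp_apply]
    rw [Complex.ofReal_inv, Complex.ofReal_log (by linarith [hx.2])]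
    push_cast; rfl
  have hz : ∑ a, g a = 0 := by
    have h9 := hfin.mul hlog0
    rw [mul_zero] at h9
    refine tendsto_nhds_unique (tendsto_const_nhds.congr' ?_) h9
    filter_upwards [hmem] with x hx
    rw [mul_assoc, mul_inv_cancel₀, mul_one]
    have : (1:ℂ) - x = ((1 - x : ℝ) : ℂ) := by push_cast; rfl
    rw [this, ← Complex.ofReal_log (by linarith [hx.2])]
    exact_mod_cast (Real.log_neg (by linarith [hx.2]) (by linarith [hx.1])).ne
  refine ⟨hz, ?_⟩
  simp only [hz, zero_mul] at hfin
  have := tendsto_nhds_unique hfin tendsto_const_nhds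
  linear_combination -this


open NumberField in
lemma dr_main0 (K : Type) [Field K] [NumberField K] (q : ℕ) [NeZero q]
    [IsCyclotomicExtension {q} ℚ K] (g : ZMod q → ℤ) (hg0 : g 0 = 0)
    (hl : Tendsto (fun N : ℕ => ∑ n ∈ range N, (g n : ℂ) / n) atTop (𝓝 0)) (u : (ZMod q)ˣ) :
    Tendsto (fun s : ℝ => LSeries (fun n => (g (u * n) : ℂ)) s) (𝓝[>] 1) (𝓝 0) := by
  classical
  have hq : (q:ℂ) ≠ 0 := by exact_mod_cast NeZero.ne q
  obtain ⟨z, hz⟩ := IsCyclotomicExtension.exists_isPrimitiveRoot ℚ K (Set.mem_singleton q) (NeZero.ne q)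
  have hirr := Polynomial.cyclotomic.irreducible_rat (NeZero.pos q)
  let E := hz.embeddingsEquivPrimitiveRoots ℂ hirr
  have hη := Complex.isPrimitiveRoot_exp q (NeZero.ne q)
  set η := Complex.exp (2 * Real.pi * Complex.I / q) with hηd
  set h : ℕ := ((u⁻¹ : (ZMod q)ˣ) : ZMod q).val with hh
  have hcop : h.Coprime q := ZMod.val_coe_unit_coprime _
  have hη' := hη.pow_of_coprime h hcop
  have hE : ∀ y, IsPrimitiveRoot y q → ∃ φ : K →ₐ[ℚ] ℂ, φ z = y := by
    intro y hy
    refine ⟨E.symm ⟨y, (mem_primitiveRoots (NeZero.pos q)).2 hy⟩, ?_⟩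
    have := hz.embeddingsEquivPrimitiveRoots_apply_coe ℂ hirr (E.symm ⟨y, (mem_primitiveRoots (NeZero.pos q)).2 hy⟩)
    rw [← this]
    change ((E (E.symm _) : primitiveRoots q ℂ) : ℂ) = y
    rw [Equiv.apply_symm_apply]
  obtain ⟨φ, hφ⟩ := hE η hη
  obtain ⟨ψ, hψ⟩ := hE _ hη'
  set χ := AddChar.zmodChar q hη.pow_eq_one with hχd
  have hχ : χ.IsPrimitive := AddChar.zmodChar_primitive_of_primitive_root q hη
  have hφχ : ∀ a : ZMod q, φ (z ^ a.val) = χ a := by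
    intro a; rw [map_pow, hφ, hχd, AddChar.zmodChar_apply]
  have hψχ : ∀ a : ZMod q, ψ (z ^ a.val) = χ ((u⁻¹ : (ZMod q)ˣ) * a) := by
    intro a
    rw [map_pow, hψ, ← pow_mul, hχd, ← AddChar.zmodChar_apply' hη.pow_eq_one]
    congr 1
    rw [Nat.cast_mul, hh, ZMod.natCast_zmod_val, ZMod.natCast_zmod_val]
  obtain ⟨hsum, hval⟩ := dr_val q χ hχ (fun a => (g a : ℂ)) 0 hl
  rw [mul_zero, zero_add] at hval
  have hint : ∀ k : {k : ZMod q // k ≠ 0}, IsIntegral ℤ (1 - z ^ (k:ZMod q).val) := fun k =>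
    isIntegral_one.sub ((hz.isIntegral (NeZero.pos q)).pow _)
  have hconj := bk_conj (φ : K →+* ℂ) (ψ : K →+* ℂ) (J := {k : ZMod q // k ≠ 0})
    (fun k => Complex.log (1 - χ k)) (fun k => ⟨1 - z ^ (k:ZMod q).val, hint k⟩) (by
      intro k
      rw [Complex.exp_log]
      · change _ = φ (1 - z ^ (k:ZMod q).val)
        rw [map_sub, map_one, hφχ]
      · rw [sub_ne_zero]
        intro h1
        exact k.2 ((hχ.zmod_char_eq_one_iff q k).1 h1.symm))
    (fun k => ∑ a, (g a : K) * z ^ (-(a * k)).val) (by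
      rw [← hval]
      refine Finset.sum_congr rfl fun k _ => ?_
      congr 1
      simp only [RingHom.coe_coe, map_sum, map_mul, map_intCast, hφχ])
  obtain ⟨l, hl1, hl2⟩ := dr_abel q (fun a => (g (u * a) : ℂ)) (by simp [hg0]) (by
    rw [← hsum]
    exact Equiv.sum_comp (Units.mulLeft u) (fun a => (g a : ℂ)))
  obtain ⟨-, hval2⟩ := dr_val q χ hχ (fun a => (g (u * a) : ℂ)) l hl1
  have : ∑ k : {k : ZMod q // k ≠ 0}, (∑ a, (g (u * a) : ℂ) * χ (-(a * k))) * Complex.log (1 - χ k) = 0 := by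
    rw [← hconj]
    refine Finset.sum_congr rfl fun k _ => ?_
    congr 1
    simp only [RingHom.coe_coe, map_sum, map_mul, map_intCast, hψχ]
    rw [← Equiv.sum_comp (Units.mulLeft u) (fun a => (g a : ℂ) * χ ((u⁻¹ : (ZMod q)ˣ) * -(a * k)))]
    refine Finset.sum_congr rfl fun a _ => ?_
    simp only [Units.mulLeft_apply]
    congr 2
    rw [mul_neg, ← mul_assoc, ← mul_assoc, Units.inv_mul, one_mul]
  rw [this, add_zero, mul_eq_zero] at hval2
  rw [hval2.resolve_left hq] at hl2
  exact hl2

lemma dr_main (q : ℕ) [NeZero q] (g : ZMod q → ℤ) (hg0 : g 0 = 0)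
    (hl : Tendsto (fun N : ℕ => ∑ n ∈ range N, (g n : ℂ) / n) atTop (𝓝 0)) (u : (ZMod q)ˣ) :
    Tendsto (fun s : ℝ => LSeries (fun n => (g (u * n) : ℂ)) s) (𝓝[>] 1) (𝓝 0) :=
  have : NeZero ((q : ℕ) : ℚ) := ⟨by exact_mod_cast NeZero.ne q⟩
  have h1 := CyclotomicField.isCyclotomicExtension q ℚ
  have h3 : @IsCyclotomicExtension {q} ℚ (CyclotomicField q ℚ) _ _ DivisionRing.toRatAlgebra := by
    convert! h1
  dr_main0 (CyclotomicField q ℚ) q g hg0 hl u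


/-- sum of the Moebius function over divisors prime to `q` -/
def ek (q n : ℕ) : ℤ := ∑ b ∈ n.divisors, if b.Coprime q then ArithmeticFunction.moebius b else 0

/-- indicator of being prime to `q` -/
def ekc (q : ℕ) : ArithmeticFunction ℤ := ⟨fun n => if n ≠ 0 ∧ n.Coprime q then 1 else 0, by simp⟩

lemma ek_one (q : ℕ) : ek q 1 = 1 := by simp [ek]

lemma ek_nonneg (q n : ℕ) : 0 ≤ ek q n := by
  rcases Nat.eq_zero_or_pos n with rfl | hn
  · simp [ek]
  have hc : (ekc q).IsMultiplicative := by
    rw [ArithmeticFunction.IsMultiplicative.iff_ne_zero]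
    refine ⟨by simp [ekc], ?_⟩
    intro m n hm hn _
    simp only [ekc, ArithmeticFunction.coe_mk, Nat.coprime_mul_iff_left]
    have h0 : m * n ≠ 0 := mul_ne_zero hm hn
    split_ifs <;> first | rfl | (exfalso; tauto)
  set E : ArithmeticFunction ℤ :=
    (ArithmeticFunction.zeta : ArithmeticFunction ℤ) * ArithmeticFunction.moebius.pmul (ekc q) with hE
  have hEm : E.IsMultiplicative :=
    ArithmeticFunction.isMultiplicative_zeta.natCast.mul
      (ArithmeticFunction.isMultiplicative_moebius.pmul hc)
  have he : ∀ m, E m = ek q m := by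
    intro m
    rw [hE, ArithmeticFunction.coe_zeta_mul_apply, ek]
    refine Finset.sum_congr rfl fun b hb => ?_
    have hb0 : b ≠ 0 := (Nat.pos_of_mem_divisors hb).ne'
    rw [ArithmeticFunction.pmul_apply]
    simp only [ekc, ArithmeticFunction.coe_mk]
    split_ifs <;> first | (exfalso; tauto) | simp
  rw [← he, hEm.multiplicative_factorization _ hn.ne']
  refine Finset.prod_nonneg fun p hp => ?_
  have hpp : p.Prime := Nat.prime_of_mem_primeFactors hp
  change 0 ≤ E (p ^ n.factorization p)
  rw [he, ek, Nat.sum_divisors_prime_pow hpp]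
  rw [Finset.sum_range_succ']
  have hk : n.factorization p ≠ 0 := Finsupp.mem_support_iff.mp hp
  obtain ⟨k, hk⟩ := Nat.exists_eq_succ_of_ne_zero hk
  rw [hk, Nat.succ_eq_add_one, Finset.sum_range_succ']
  have : ∀ i : ℕ, (if (p ^ (i + 1 + 1)).Coprime q then ArithmeticFunction.moebius (p ^ (i + 1 + 1)) else 0) = 0 := by
    intro i
    rw [ArithmeticFunction.moebius_apply_prime_pow hpp (by omega)]
    simp
  simp only [this]
  simp only [zero_add, pow_one, ArithmeticFunction.moebius_apply_prime hpp]
  split_ifs <;> simp_all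

lemma ek_conv (q : ℕ) [NeZero q] (g : ZMod q → ℤ) (n : ℕ) :
    ∑ u : (ZMod q)ˣ, LSeries.convolution (fun n : ℕ => (g (u * n) : ℂ)) (fun b : ℕ =>
      if (u : ZMod q) = (b : ZMod q) then (ArithmeticFunction.moebius b : ℂ) else 0) n = ek q n * g n := by
  classical
  simp only [LSeries.convolution_def]
  rw [Finset.sum_comm, ek, Int.cast_sum, Finset.sum_mul,
    ← Nat.sum_divisorsAntidiagonal' (fun _ b => (((if b.Coprime q then ArithmeticFunction.moebius b else 0 : ℤ)) : ℂ) * (g n : ℂ))]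
  refine Finset.sum_congr rfl fun p hp => ?_
  have hpn := (Nat.mem_divisorsAntidiagonal.mp hp).1
  by_cases hb : p.2.Coprime q
  · rw [if_pos hb]
    obtain ⟨v, hv⟩ := (ZMod.isUnit_iff_coprime p.2 q).2 hb
    simp only [← hv, Units.val_inj]
    simp only [mul_ite, mul_zero, Finset.sum_ite_eq', Finset.mem_univ, if_true]
    rw [← hpn, Nat.cast_mul, hv, mul_comm, mul_comm (p.2 : ZMod q)]
  · rw [if_neg hb]
    rw [Finset.sum_eq_zero]
    · simp
    intro u _
    rw [if_neg, mul_zero]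
    intro h
    exact hb ((ZMod.isUnit_iff_coprime p.2 q).1 (h ▸ u.isUnit))


lemma el_real : Tendsto (fun s : ℝ => (s : ℂ)) (𝓝[>] 1) (𝓝[≠] 1) := by
  rw [tendsto_nhdsWithin_iff]
  constructor
  · have := (Complex.continuous_ofReal.tendsto (1:ℝ)).mono_left (nhdsWithin_le_nhds (s := Set.Ioi 1))
    simpa using this
  · filter_upwards [self_mem_nhdsWithin] with s hs
    have : (1:ℝ) < s := hs
    simp only [Set.mem_compl_iff, Set.mem_singleton_iff]
    exact_mod_cast this.ne'

lemma el_chi (q : ℕ) [NeZero q] (χ : DirichletCharacter ℂ q) :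
    ∃ l, Tendsto (fun s : ℝ => LSeries ((fun n : ℕ => χ n) * (fun n : ℕ => (ArithmeticFunction.moebius n : ℂ))) s)
      (𝓝[>] 1) (𝓝 l) := by
  have hev : ∀ᶠ s : ℝ in 𝓝[>] 1, (DirichletCharacter.LFunction χ s)⁻¹ =
      LSeries ((fun n : ℕ => χ n) * (fun n : ℕ => (ArithmeticFunction.moebius n : ℂ))) s := by
    filter_upwards [self_mem_nhdsWithin] with s hs
    have hs' : 1 < (s:ℂ).re := by simpa using hs
    rw [DirichletCharacter.LFunction_eq_LSeries χ hs']
    exact inv_eq_of_mul_eq_one_right (DirichletCharacter.LSeries.mul_mu_eq_one χ hs')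
  by_cases hχ : χ = 1
  · subst hχ
    refine ⟨0, Tendsto.congr' hev ?_⟩
    have h1 := (DirichletCharacter.LFunctionTrivChar_residue_one (N := q)).comp el_real
    have hne : ∏ p ∈ q.primeFactors, (1 - (p : ℂ)⁻¹) ≠ 0 := by
      rw [Finset.prod_ne_zero_iff]
      intro p hp
      have := (Nat.prime_of_mem_primeFactors hp).one_lt
      rw [sub_ne_zero]
      intro h
      have h2 : (p:ℂ) = 1 := by rw [← inv_inv (p:ℂ), ← h, inv_one]
      have : p = 1 := by exact_mod_cast h2
      omega
    have h3 := h1.inv₀ hne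
    have h4 : Tendsto (fun s : ℝ => (s:ℂ) - 1) (𝓝[>] 1) (𝓝 0) := by
      have := (el_real.mono_right nhdsWithin_le_nhds).sub_const 1
      simpa using this
    have h5 := h4.mul h3
    rw [zero_mul] at h5
    refine h5.congr' ?_
    filter_upwards [self_mem_nhdsWithin] with s hs
    have hs' : (1:ℝ) < s := hs
    have : (s:ℂ) - 1 ≠ 0 := by rw [sub_ne_zero]; exact_mod_cast hs'.ne'
    simp only [Function.comp_apply, DirichletCharacter.LFunctionTrivChar, mul_inv]
    rw [← mul_assoc, mul_inv_cancel₀ this, one_mul]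
  · refine ⟨_, Tendsto.congr' hev (Tendsto.inv₀ ?_ (DirichletCharacter.LFunction_apply_one_ne_zero hχ))⟩
    exact ((DirichletCharacter.differentiable_LFunction hχ).continuous.tendsto 1).comp
      (el_real.mono_right nhdsWithin_le_nhds)

lemma el_mu_summ (q : ℕ) (χ : DirichletCharacter ℂ q) (s : ℝ) (hs : 1 < s) :
    LSeriesSummable ((fun n : ℕ => χ n) * (fun n : ℕ => (ArithmeticFunction.moebius n : ℂ))) s :=
  DirichletCharacter.LSeriesSummable_mul χ (ArithmeticFunction.LSeriesSummable_moebius_iff.mpr (by simpa using hs))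

lemma el_M (q : ℕ) [NeZero q] (u : (ZMod q)ˣ) :
    ∃ l, Tendsto (fun s : ℝ => LSeries (fun b : ℕ =>
      if (u : ZMod q) = (b : ZMod q) then (ArithmeticFunction.moebius b : ℂ) else 0) s) (𝓝[>] 1) (𝓝 l) := by
  choose l hl using el_chi q
  have hφ : (q.totient : ℂ) ≠ 0 := by exact_mod_cast (Nat.totient_pos.2 (NeZero.pos q)).ne'
  refine ⟨∑ χ : DirichletCharacter ℂ q, ((q.totient : ℂ)⁻¹ * χ (u : ZMod q)⁻¹) * l χ, ?_⟩
  refine (tendsto_finsetSum _ (fun χ _ => (hl χ).const_mul _)).congr' ?_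
  filter_upwards [self_mem_nhdsWithin] with s hs
  have h1 : ∀ χ : DirichletCharacter ℂ q, LSeriesSummable (((q.totient : ℂ)⁻¹ * χ (u : ZMod q)⁻¹) •
      ((fun n : ℕ => χ n) * (fun n : ℕ => (ArithmeticFunction.moebius n : ℂ)))) s := fun χ =>
    (el_mu_summ q χ s hs).smul _
  refine (Finset.sum_congr rfl fun χ _ => (LSeries_smul _ _ _).symm).trans ?_
  rw [← LSeries_sum (fun χ _ => h1 χ)]
  refine LSeries_congr (fun {n} _ => ?_) _
  simp only [Finset.sum_apply, Pi.smul_apply, Pi.mul_apply, smul_eq_mul]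
  have h2 := DirichletCharacter.sum_char_inv_mul_char_eq ℂ u.isUnit (n : ZMod q)
  have h3 : ∀ χ : DirichletCharacter ℂ q, (q.totient : ℂ)⁻¹ * χ (u : ZMod q)⁻¹ * (χ n * (ArithmeticFunction.moebius n : ℂ))
     = (χ (u : ZMod q)⁻¹ * χ n) * ((q.totient : ℂ)⁻¹ * (ArithmeticFunction.moebius n : ℂ)) := fun χ => by ring
  simp only [h3]
  rw [← Finset.sum_mul, h2]
  split_ifs
  · field_simp
  · simp

lemma el_M_summ (q : ℕ) [NeZero q] (u : (ZMod q)ˣ) (s : ℝ) (hs : 1 < s) :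
    LSeriesSummable (fun b : ℕ =>
      if (u : ZMod q) = (b : ZMod q) then (ArithmeticFunction.moebius b : ℂ) else 0) s := by
  refine LSeriesSummable_of_bounded_of_one_lt_real (m := 1) (fun n _ => ?_) hs
  split_ifs
  · rw [Complex.norm_intCast]
    exact_mod_cast ArithmeticFunction.abs_moebius_le_one
  · simp

lemma el_eg (q : ℕ) [NeZero q] (g : ZMod q → ℤ) (hg0 : g 0 = 0)
    (hl : Tendsto (fun N : ℕ => ∑ n ∈ range N, (g n : ℂ) / n) atTop (𝓝 0)) :
    Tendsto (fun s : ℝ => LSeries (fun n : ℕ => (ek q n : ℂ) * (g n : ℂ)) s) (𝓝[>] 1) (𝓝 0) := by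
  choose l hM using el_M q
  have h1 := tendsto_finsetSum (Finset.univ : Finset (ZMod q)ˣ) (fun u _ => (dr_main q g hg0 hl u).mul (hM u))
  simp only [zero_mul, Finset.sum_const_zero] at h1
  refine h1.congr' ?_
  filter_upwards [self_mem_nhdsWithin] with s hs
  have hs' : 1 < (s:ℂ).re := by simpa using hs
  have hgs : ∀ u : (ZMod q)ˣ, LSeriesSummable (fun n : ℕ => (g (u * n) : ℂ)) s := fun u =>
    ZMod.LSeriesSummable_of_one_lt_re (fun a : ZMod q => (g ((u : ZMod q) * a) : ℂ)) hs'
  refine (Finset.sum_congr rfl fun u _ => (LSeries_convolution' (hgs u) (el_M_summ q u s hs)).symm).trans ?_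
  rw [← LSeries_sum (fun u _ => (hgs u).convolution (el_M_summ q u s hs))]
  refine LSeries_congr (fun {n} _ => ?_) _
  rw [Finset.sum_apply]
  exact ek_conv q g n

lemma el_e_conv (q : ℕ) [NeZero q] : (fun n : ℕ => (ek q n : ℂ)) =
    LSeries.convolution 1 ((fun n : ℕ => (1 : DirichletCharacter ℂ q) n) * (fun n : ℕ => (ArithmeticFunction.moebius n : ℂ))) := by
  rw [LSeries.convolution_def]
  funext n
  rw [Nat.sum_divisorsAntidiagonal' (fun a b : ℕ => (1 : ℕ → ℂ) a * ((fun n : ℕ => (1 : DirichletCharacter ℂ q) n) * (fun n : ℕ => (ArithmeticFunction.moebius n : ℂ))) b), ek, Int.cast_sum]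
  refine Finset.sum_congr rfl fun b _ => ?_
  simp only [Pi.one_apply, Pi.mul_apply, one_mul]
  split_ifs with h
  · rw [MulChar.one_apply ((ZMod.isUnit_iff_coprime b q).2 h), one_mul]
  · rw [MulChar.map_nonunit _ (fun h2 => h ((ZMod.isUnit_iff_coprime b q).1 h2)), zero_mul, Int.cast_zero]

lemma el_e_summ (q : ℕ) [NeZero q] (s : ℝ) (hs : 1 < s) : LSeriesSummable (fun n : ℕ => (ek q n : ℂ)) s := by
  rw [el_e_conv]
  exact (LSeriesSummable_one_iff.mpr (by simpa using hs)).convolution (el_mu_summ q 1 s hs)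

lemma el_e (q : ℕ) [NeZero q] : Tendsto (fun s : ℝ => LSeries (fun n : ℕ => (ek q n : ℂ)) s) (𝓝[>] 1)
    (𝓝 (((q:ℝ) / q.totient : ℝ) : ℂ)) := by
  have hne : ∀ s : ℝ, 1 ≤ s → ∏ p ∈ q.primeFactors, (1 - (p : ℂ) ^ (-(s:ℂ))) ≠ 0 := by
    intro s hs
    rw [Finset.prod_ne_zero_iff]
    intro p hp
    have h1 := (Nat.prime_of_mem_primeFactors hp).one_lt
    rw [sub_ne_zero]
    intro h
    have h2 := congrArg norm h
    rw [Complex.norm_natCast_cpow_of_pos (by omega), norm_one] at h2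
    have : (p:ℝ) ^ (-(s:ℂ)).re < 1 :=
      Real.rpow_lt_one_of_one_lt_of_neg (by exact_mod_cast h1) (by simp; linarith)
    linarith
  have hval : (((q:ℝ) / q.totient : ℝ) : ℂ) = (∏ p ∈ q.primeFactors, (1 - (p : ℂ) ^ (-((1:ℝ):ℂ))))⁻¹ := by
    have h1 : ∀ p : ℕ, (p:ℂ) ^ (-((1:ℝ):ℂ)) = (p:ℂ)⁻¹ := fun p => by
      rw [Complex.ofReal_one, Complex.cpow_neg_one]
    simp only [h1]
    have h2 := Nat.totient_eq_mul_prod_factors q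
    have h3 : (q.totient : ℂ) = q * ∏ p ∈ q.primeFactors, (1 - (p:ℂ)⁻¹) := by
      have h4 := congrArg (fun x : ℚ => (x : ℂ)) h2
      push_cast at h4
      exact h4
    have hq : (q:ℂ) ≠ 0 := by exact_mod_cast NeZero.ne q
    push_cast
    rw [h3, div_mul_eq_div_div, div_self hq, one_div]
  rw [hval]
  have hc : Tendsto (fun s : ℝ => ∏ p ∈ q.primeFactors, (1 - (p : ℂ) ^ (-(s:ℂ)))) (𝓝[>] 1)
      (𝓝 (∏ p ∈ q.primeFactors, (1 - (p : ℂ) ^ (-((1:ℝ):ℂ))))) := by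
    refine Tendsto.mono_left (Continuous.tendsto ?_ 1) nhdsWithin_le_nhds
    refine continuous_finsetProd _ fun p hp => ?_
    have : NeZero p := ⟨(Nat.prime_of_mem_primeFactors hp).ne_zero⟩
    have h0 : (p:ℂ) ≠ 0 := by exact_mod_cast this.out
    refine continuous_const.sub (Continuous.const_cpow (by fun_prop) (Or.inl h0))
  refine (hc.inv₀ (hne 1 le_rfl)).congr' ?_
  filter_upwards [self_mem_nhdsWithin] with s hs
  have hs0 : (1:ℝ) < s := hs
  have hs' : 1 < (s:ℂ).re := by simpa using hs
  have hs1 : (s:ℂ) ≠ 1 := by exact_mod_cast hs0.ne'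
  rw [el_e_conv, LSeries_convolution' (LSeriesSummable_one_iff.mpr hs') (el_mu_summ q 1 s hs),
    LSeries_one_eq_riemannZeta hs']
  have h1 := DirichletCharacter.LSeries.mul_mu_eq_one (1 : DirichletCharacter ℂ q) hs'
  rw [← DirichletCharacter.LFunction_eq_LSeries _ hs'] at h1
  have h2 := DirichletCharacter.LFunctionTrivChar_eq_mul_riemannZeta (N := q) hs1
  rw [DirichletCharacter.LFunctionTrivChar] at h2
  rw [h2, mul_assoc] at h1
  exact inv_eq_of_mul_eq_one_right h1


lemma er_pos (w : ℕ → ℤ) (hw : ∀ n, 0 ≤ w n) (s : ℝ) (hs : LSeriesSummable (fun n => (w n : ℂ)) s) :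
    (w 1 : ℝ) ≤ (LSeries (fun n => (w n : ℂ)) s).re := by
  have h1 : HasSum (LSeries.term (fun n => (w n : ℂ)) s) (LSeries (fun n => (w n : ℂ)) s) := hs.hasSum
  have h2 := Complex.hasSum_re h1
  have ht : ∀ n : ℕ, (LSeries.term (fun n => (w n : ℂ)) s n).re = if n = 0 then 0 else (w n : ℝ) / (n:ℝ) ^ s := by
    intro n
    rw [LSeries.term_def]
    split_ifs with h
    · simp
    · have : (w n : ℂ) / (n:ℂ) ^ (s:ℂ) = (((w n : ℝ) / (n:ℝ) ^ s : ℝ) : ℂ) := by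
        push_cast
        rw [Complex.ofReal_cpow (by positivity)]
        simp
      rw [this, Complex.ofReal_re]
  have h3 := le_hasSum h2 1 (fun n _ => by
    rw [ht]
    split_ifs
    · exact le_rfl
    · have : (0:ℝ) ≤ w n := by exact_mod_cast hw n
      positivity)
  rw [ht] at h3
  simpa using h3

lemma er_g (q : ℕ) [NeZero q] (hq : 1 < q) (g : ZMod q → ℤ) (hg0 : g 0 = 0) (hg : ∀ a, a ≠ 0 → g a = 1 ∨ g a = -1)
    (hl : Tendsto (fun N : ℕ => ∑ n ∈ range N, (g n : ℂ) / n) atTop (𝓝 0)) : 2 ≤ (q:ℝ) / q.totient := by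
  have : Fact (1 < q) := ⟨hq⟩
  have hb : ∀ a, |g a| ≤ 1 := by
    intro a
    by_cases h : a = 0
    · simp [h, hg0]
    · rcases hg a h with h | h <;> simp [h]
  have h1 := ((el_eg q g hg0 hl).const_mul (g 1 : ℂ)).add (el_e q)
  have h2 := (Complex.continuous_re.tendsto _).comp h1
  have h3 : ((g 1 : ℂ) * 0 + (((q:ℝ) / q.totient : ℝ) : ℂ)).re = (q:ℝ) / q.totient := by
    rw [mul_zero, zero_add, Complex.ofReal_re]
  rw [h3] at h2
  refine ge_of_tendsto h2 ?_
  filter_upwards [self_mem_nhdsWithin] with s hs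
  have he := el_e_summ q s hs
  have heg : LSeriesSummable (fun n : ℕ => (ek q n : ℂ) * (g n : ℂ)) s := by
    refine Summable.of_norm_bounded he.norm (fun n => LSeries.norm_term_le _ ?_)
    rw [norm_mul]
    refine mul_le_of_le_one_right (norm_nonneg _) ?_
    rw [Complex.norm_intCast]
    exact_mod_cast hb n
  let w : ℕ → ℤ := fun n => ek q n * (g 1 * g n + 1)
  have hwe : (fun n => (w n : ℂ)) = (g 1 : ℂ) • (fun n : ℕ => (ek q n : ℂ) * (g n : ℂ)) + (fun n : ℕ => (ek q n : ℂ)) := by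
    funext n
    simp only [w, Pi.add_apply, Pi.smul_apply, smul_eq_mul]
    push_cast
    ring
  have hw0 : ∀ n, 0 ≤ w n := by
    intro n
    refine mul_nonneg (ek_nonneg q n) ?_
    have : |g 1 * g n| ≤ 1 := by
      rw [abs_mul]
      exact mul_le_one₀ (hb _) (abs_nonneg _) (hb _)
    have := (abs_le.1 this).1
    omega
  have hws : LSeriesSummable (fun n => (w n : ℂ)) s := by
    rw [hwe]
    exact (heg.smul _).add he
  have h4 := er_pos w hw0 s hws
  rw [hwe, LSeries_add (heg.smul _) he, LSeries_smul] at h4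
  have hw1 : w 1 = 2 := by
    simp only [w, ek_one, Nat.cast_one]
    rcases hg 1 one_ne_zero with h | h <;> simp [h]
  rw [hw1] at h4
  exact_mod_cast h4

lemma er_main (q : ℕ) (hq : 1 < q) (hF : ErdosConjectureFalse q) : 2 ≤ (q:ℝ) / q.totient := by
  obtain ⟨f, ⟨hp, h1, h0⟩, hl⟩ := hF
  have : NeZero q := ⟨by omega⟩
  have hper : ∀ r, 1 ≤ r → ∀ k, f (r + k * q) = f r := by
    intro r hr k
    induction k with
    | zero => simp
    | succ k ih => rw [← ih, ← hp (r + k * q) (by omega)]; congr 1; ring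
  let g : ZMod q → ℤ := fun a => if a = 0 then 0 else f a.val
  have hval : ∀ a : ZMod q, a ≠ 0 → 1 ≤ a.val ∧ ¬ q ∣ a.val := by
    intro a ha
    have h2 : 1 ≤ a.val := Nat.one_le_iff_ne_zero.2 (by rwa [Ne, ZMod.val_eq_zero])
    exact ⟨h2, fun h => absurd (Nat.le_of_dvd h2 h) (not_le.2 (ZMod.val_lt a))⟩
  have hfg : ∀ n : ℕ, 1 ≤ n → f n = g n := by
    intro n hn
    by_cases h : (n : ZMod q) = 0
    · simp only [g, h, if_true]
      exact h0 n hn ((ZMod.natCast_eq_zero_iff n q).1 h)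
    · simp only [g, h, if_false]
      rw [← hper _ (hval _ h).1 (n / q), ZMod.val_natCast]
      congr 1
      rw [mul_comm]
      exact (Nat.mod_add_div n q).symm
  refine er_g q hq g (by simp [g]) (fun a ha => ?_) ?_
  · simp only [g, ha, if_false]
    exact h1 _ (hval a ha).1 (hval a ha).2
  · rw [← tendsto_add_atTop_iff_nat 1]
    have h2 := (Complex.continuous_ofReal.tendsto 0).comp hl
    rw [Complex.ofReal_zero] at h2
    refine h2.congr fun N => ?_
    rw [Finset.sum_range_succ', Finset.range_eq_Ico, Finset.sum_Ico_add' (fun n : ℕ => (g n : ℂ) / n) 0 N 1]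
    simp only [Function.comp_apply, Nat.cast_zero, div_zero, add_zero, zero_add, Complex.ofReal_sum]
    refine Finset.sum_congr (by ext; simp) fun n hn => ?_
    rw [hfg n (by simp at hn; omega)]
    push_cast
    rfl


noncomputable def da (p : ℕ) : ℝ := if p.Prime ∧ p ≠ 2 then (((p:ℝ)/(p-1))^6-1)/p else 0

lemma da_nonneg (p : ℕ) : 0 ≤ da p := by
  unfold da
  split_ifs with h
  · have h1 : (2:ℝ) ≤ p := by exact_mod_cast h.1.two_le
    have h2 : 1 ≤ (p:ℝ)/(p-1) := by
      rw [le_div_iff₀ (by linarith)]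
      linarith
    have := one_le_pow₀ h2 (n := 6)
    exact div_nonneg (by linarith) (by linarith)
  · exact le_rfl

lemma da_tail (n : ℕ) (hn : 17 ≤ n) : da n ≤ 7.2 / (n * (n-1)) := by
  have h1 : (17:ℝ) ≤ n := by exact_mod_cast hn
  unfold da
  split_ifs with h
  · obtain ⟨x, hx⟩ : ∃ x : ℝ, x = 1 / ((n:ℝ) - 1) := ⟨_, rfl⟩
    have hx0 : 0 ≤ x := by rw [hx]; exact div_nonneg zero_le_one (by linarith)
    have hx1 : x ≤ 1/16 := by
      rw [hx]
      exact one_div_le_one_div_of_le (by norm_num) (by linarith)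
    have h2 : (n:ℝ)/(n-1) = 1 + x := by
      rw [hx]
      have : (n:ℝ) - 1 ≠ 0 := by linarith
      field_simp
      ring
    have h3 : (7.2:ℝ) / (n * (n-1)) = 7.2 * x / n := by
      rw [hx]
      have : (n:ℝ) - 1 ≠ 0 := by linarith
      field_simp
    rw [h2, h3]
    refine div_le_div_of_nonneg_right ?_ (by linarith)
    have e2 : x^2 ≤ x/16 := by nlinarith
    have e3 : x^3 ≤ x/16/16 := by nlinarith
    have e4 : x^4 ≤ x/16/16/16 := by nlinarith
    have e5 : x^5 ≤ x/16/16/16/16 := by nlinarith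
    have e6 : x^6 ≤ x/16/16/16/16/16 := by nlinarith
    nlinarith
  · exact div_nonneg (by norm_num) (mul_nonneg (by linarith) (by linarith))

lemma da_prod (m : ℕ) : ∏ p ∈ range (17 + 2 * m), (1 + da p) ≤ 12.6 * (1 - 3.6 / (15 + 2 * m)) := by
  induction m with
  | zero =>
    simp only [mul_zero, add_zero, Finset.prod_range_succ, Finset.prod_range_zero, da]
    norm_num
  | succ m ih =>
    rw [show 17 + 2 * (m+1) = 17 + 2 * m + 1 + 1 by ring, Finset.prod_range_succ, Finset.prod_range_succ]
    have h1 : da (17 + 2 * m + 1) = 0 := by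
      unfold da
      rw [if_neg]
      rintro ⟨h, h2⟩
      rcases h.eq_two_or_odd with h | h <;> omega
    rw [h1, add_zero, mul_one]
    have h2 := da_tail (17 + 2 * m) (by omega)
    have h3 := da_nonneg (17 + 2 * m)
    have hm : (0:ℝ) ≤ m := by positivity
    push_cast at h2 ⊢
    have h4 : 0 ≤ 12.6 * (1 - 3.6 / (15 + 2 * (m:ℝ))) := by
      have : 3.6 / (15 + 2 * (m:ℝ)) ≤ 1 := by
        rw [div_le_one (by positivity)]
        linarith
      linarith
    refine (mul_le_mul ih (add_le_add_right h2 1) (by linarith) h4).trans ?_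
    rw [mul_assoc]
    refine mul_le_mul_of_nonneg_left ?_ (by norm_num)
    rw [show (17 + 2 * (m:ℝ) - 1) = 16 + 2 * m by ring, show (15 + 2 * ((m:ℝ)+1)) = 17 + 2 * m by ring]
    have e : (1 - 3.6 / (17 + 2 * (m:ℝ))) - (1 - 3.6 / (15 + 2 * (m:ℝ))) * (1 + 7.2 / ((17 + 2 * (m:ℝ)) * (16 + 2 * m)))
      = (7.2 * 1 + 7.2 * 3.6) / ((15 + 2 * (m:ℝ)) * ((17 + 2 * (m:ℝ)) * (16 + 2 * m))) := by
      field_simp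
      ring
    have : 0 ≤ (7.2 * 1 + 7.2 * 3.6) / ((15 + 2 * (m:ℝ)) * ((17 + 2 * (m:ℝ)) * (16 + 2 * m))) := by positivity
    linarith

lemma da_prod_le (t : Finset ℕ) : ∏ p ∈ t, (1 + da p) ≤ 12.6 := by
  obtain ⟨N, hN⟩ := t.exists_nat_subset_range
  have h1 : ∏ p ∈ t, (1 + da p) ≤ ∏ p ∈ range (17 + 2 * N), (1 + da p) := by
    have hs : t ⊆ range (17 + 2 * N) := hN.trans (Finset.range_subset_range.2 (by omega))
    rw [← Finset.prod_sdiff hs]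
    refine le_mul_of_one_le_left (Finset.prod_nonneg fun p _ => by linarith [da_nonneg p]) ?_
    refine Finset.one_le_prod fun p _ => ?_
    linarith [da_nonneg p]
  refine h1.trans ((da_prod N).trans ?_)
  have : (0:ℝ) ≤ 3.6 / (15 + 2 * N) := by positivity
  linarith

noncomputable def dF (t : Finset ℕ) : ℝ := ∏ p ∈ t, da p

lemma dF_nonneg (t : Finset ℕ) : 0 ≤ dF t := Finset.prod_nonneg fun p _ => da_nonneg p

lemma dF_sum_le (T : Finset (Finset ℕ)) : ∑ t ∈ T, dF t ≤ 12.6 := by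
  refine le_trans ?_ (da_prod_le (T.biUnion id))
  rw [Finset.prod_one_add]
  refine Finset.sum_le_sum_of_subset_of_nonneg ?_ (fun t _ _ => dF_nonneg t)
  intro t ht
  rw [Finset.mem_powerset]
  exact Finset.subset_biUnion_of_mem id ht

lemma dF_summable : Summable dF := summable_of_sum_le dF_nonneg dF_sum_le


def dQ (X : ℕ) : Finset ℕ := (Finset.Icc 1 X).filter (fun q => q % 4 = 1)

lemma dn_count (X D : ℕ) (hD : D % 2 = 1) : (((dQ X).filter (fun q => D ∣ q)).card : ℝ) ≤ (X:ℝ) / (4 * D) + 1 := by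
  have h1 : ((dQ X).filter (fun q => D ∣ q)).card ≤ (range (X / (4 * D) + 1)).card := by
    refine Finset.card_le_card_of_injOn (fun q => q / (4 * D)) ?_ ?_
    · intro q hq
      simp only [dQ, Finset.coe_filter, Finset.mem_filter, Finset.mem_Icc, Set.mem_ofPred_eq] at hq
      simp only [Finset.coe_range, Set.mem_Iio]
      exact Nat.lt_succ_of_le (Nat.div_le_div_right hq.1.1.2)
    · intro q hq r hr hqr
      simp only [dQ, Finset.coe_filter, Finset.mem_filter, Finset.mem_Icc, Set.mem_ofPred_eq] at hq hr
      have hc : Nat.Coprime 4 D := by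
        have : Nat.Coprime 2 D := (Nat.coprime_two_left).2 (Nat.odd_iff.2 hD)
        exact this.pow_left 2
      have h2 : q ≡ r [MOD 4 * D] := by
        rw [← Nat.modEq_and_modEq_iff_modEq_mul hc]
        refine ⟨hq.1.2.trans hr.1.2.symm, ?_⟩
        exact (Nat.modEq_zero_iff_dvd.2 hq.2).trans (Nat.modEq_zero_iff_dvd.2 hr.2).symm
      have h3 : q / (4 * D) = r / (4 * D) := hqr
      rw [← Nat.mod_add_div q (4 * D), ← Nat.mod_add_div r (4 * D), h3, h2]
  rw [Finset.card_range] at h1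
  have h2 : ((X / (4 * D) : ℕ) : ℝ) ≤ (X:ℝ) / (4 * D) := by
    have := @Nat.cast_div_le ℝ _ _ _ X (4 * D)
    push_cast at this
    exact this
  have h3 : (((dQ X).filter (fun q => D ∣ q)).card : ℝ) ≤ ((X / (4 * D) : ℕ) : ℝ) + 1 := by exact_mod_cast h1
  linarith

lemma dn_phi (q : ℕ) (hq : q % 4 = 1) : ((q:ℝ) / q.totient) ^ 6 =
    ∑ t ∈ q.primeFactors.powerset, dF t * ((∏ p ∈ t, p : ℕ) : ℝ) := by
  have h1 : (q:ℝ) / q.totient = ∏ p ∈ q.primeFactors, ((p:ℝ) / (p-1)) := by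
    have h2 := Nat.totient_eq_mul_prod_factors q
    have h4 := congrArg (fun x : ℚ => (x : ℝ)) h2
    push_cast at h4
    have hq0 : (q:ℝ) ≠ 0 := by
      have : q ≠ 0 := by omega
      exact_mod_cast this
    rw [h4, div_mul_eq_div_div, div_self hq0, one_div, ← Finset.prod_inv_distrib]
    refine Finset.prod_congr rfl fun p hp => ?_
    have hp1 : (1:ℝ) < p := by exact_mod_cast (Nat.prime_of_mem_primeFactors hp).one_lt
    have : (p:ℝ) - 1 ≠ 0 := by linarith
    have : (p:ℝ) ≠ 0 := by linarith
    field_simp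
  have h2 : ∀ p ∈ q.primeFactors, ((p:ℝ) / (p-1)) ^ 6 = 1 + da p * p := by
    intro p hp
    have hpp := Nat.prime_of_mem_primeFactors hp
    have hpd := Nat.dvd_of_mem_primeFactors hp
    have hp0 : (p:ℝ) ≠ 0 := by exact_mod_cast hpp.ne_zero
    rw [da, if_pos ⟨hpp, by rintro rfl; omega⟩, div_mul_cancel₀ _ hp0]
    ring
  rw [h1, ← Finset.prod_pow, Finset.prod_congr rfl h2, Finset.prod_one_add]
  refine Finset.sum_congr rfl fun t _ => ?_
  rw [Finset.prod_mul_distrib, dF, Nat.cast_prod]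

noncomputable def de (X : ℕ) (t : Finset ℕ) : ℝ := if ∏ p ∈ t, p ≤ X then ((∏ p ∈ t, p : ℕ) : ℝ) / X else 0

lemma de_nonneg (X t) : 0 ≤ de X t := by
  unfold de
  split_ifs
  · positivity
  · exact le_rfl

lemma de_le (X t) : de X t ≤ 1 := by
  unfold de
  split_ifs with h
  · exact div_le_one_of_le₀ (by exact_mod_cast h) (by positivity)
  · exact zero_le_one

lemma de_summable (X : ℕ) : Summable (fun t => dF t * de X t) :=
  Summable.of_nonneg_of_le (fun t => mul_nonneg (dF_nonneg t) (de_nonneg X t))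
    (fun t => mul_le_of_le_one_right (dF_nonneg t) (de_le X t)) dF_summable

lemma de_tendsto : Tendsto (fun X : ℕ => ∑' t, dF t * de X t) atTop (𝓝 0) := by
  have h := tendsto_tsum_of_dominated_convergence (𝓕 := atTop) (f := fun (X : ℕ) t => dF t * de X t) (g := fun _ => (0:ℝ))
    dF_summable ?_ ?_
  · simpa using h
  · intro t
    have h1 : Tendsto (fun X : ℕ => ((∏ p ∈ t, p : ℕ) : ℝ) / X) atTop (𝓝 0) := tendsto_const_div_atTop_nhds_zero_nat _
    have h2 : Tendsto (fun X : ℕ => de X t) atTop (𝓝 0) := by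
      refine squeeze_zero (fun X => de_nonneg X t) (fun X => ?_) h1
      unfold de
      split_ifs
      · exact le_rfl
      · positivity
    simpa using h2.const_mul (dF t)
  · refine Eventually.of_forall fun X t => ?_
    rw [Real.norm_of_nonneg (mul_nonneg (dF_nonneg t) (de_nonneg X t))]
    exact mul_le_of_le_one_right (dF_nonneg t) (de_le X t)

lemma dn_moment (X : ℕ) (hX : 0 < X) : ∑ q ∈ dQ X, ((q:ℝ) / q.totient) ^ 6 ≤ X / 4 * 12.6 + X * ∑' t, dF t * de X t := by
  have hX' : (0:ℝ) < X := by exact_mod_cast hX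
  have h1 : ∑ q ∈ dQ X, ((q:ℝ) / q.totient) ^ 6 =
      ∑ q ∈ dQ X, ∑ t ∈ (range (X+1)).powerset, if t ⊆ q.primeFactors then dF t * ((∏ p ∈ t, p : ℕ) : ℝ) else 0 := by
    refine Finset.sum_congr rfl fun q hq => ?_
    simp only [dQ, Finset.mem_filter, Finset.mem_Icc] at hq
    rw [dn_phi q hq.2, ← Finset.sum_filter]
    refine Finset.sum_congr ?_ fun _ _ => rfl
    ext t
    simp only [Finset.mem_powerset, Finset.mem_filter]
    refine ⟨fun h => ⟨fun p hp => ?_, h⟩, fun h => h.2⟩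
    have := Nat.le_of_mem_primeFactors (h hp)
    rw [Finset.mem_range]
    omega
  rw [h1, Finset.sum_comm]
  have h2 : ∀ t ∈ (range (X+1)).powerset, (∑ q ∈ dQ X, if t ⊆ q.primeFactors then dF t * ((∏ p ∈ t, p : ℕ) : ℝ) else 0)
      ≤ X / 4 * dF t + X * (dF t * de X t) := by
    intro t _
    rw [← Finset.sum_filter, Finset.sum_const, nsmul_eq_mul]
    rcases ((dQ X).filter (fun q => t ⊆ q.primeFactors)).eq_empty_or_nonempty with he | ⟨q, hq⟩
    · rw [he]
      have := dF_nonneg t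
      have := de_nonneg X t
      simp only [Finset.card_empty, Nat.cast_zero, zero_mul]
      positivity
    · have hdvd : ∀ q, t ⊆ q.primeFactors → ∏ p ∈ t, p ∣ q := fun q h =>
        (Finset.prod_dvd_prod_of_subset _ _ _ h).trans (Nat.prod_primeFactors_dvd q)
      simp only [dQ, Finset.mem_filter, Finset.mem_Icc] at hq
      have hd := hdvd q hq.2
      have hodd : (∏ p ∈ t, p) % 2 = 1 := by
        by_contra h
        have h2 : 2 ∣ ∏ p ∈ t, p := by omega
        have := h2.trans hd
        omega
      have hle : ∏ p ∈ t, p ≤ X := (Nat.le_of_dvd (by omega) hd).trans hq.1.1.2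
      have hc : (((dQ X).filter (fun q => t ⊆ q.primeFactors)).card : ℝ) ≤ (X:ℝ) / (4 * (∏ p ∈ t, p : ℕ)) + 1 := by
        refine le_trans ?_ (dn_count X _ hodd)
        exact_mod_cast Finset.card_le_card (Finset.monotone_filter_right _ (fun q _ h => hdvd q h))
      rw [de, if_pos hle]
      generalize (∏ p ∈ t, p) = D at *
      have hD : (0:ℝ) < D := by
        have : 0 < D := by omega
        exact_mod_cast this
      have h3 := mul_le_mul_of_nonneg_right hc (mul_nonneg (dF_nonneg t) hD.le)
      refine h3.trans (le_of_eq ?_)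
      field_simp
  refine (Finset.sum_le_sum h2).trans ?_
  rw [Finset.sum_add_distrib, ← Finset.mul_sum, ← Finset.mul_sum]
  refine add_le_add (mul_le_mul_of_nonneg_left (dF_sum_le _) (by positivity)) (mul_le_mul_of_nonneg_left ?_ hX'.le)
  exact (de_summable X).sum_le_tsum _ (fun t _ => mul_nonneg (dF_nonneg t) (de_nonneg X t))

lemma dn_card (X : ℕ) : (X:ℝ) / 4 - 1 ≤ (dQ X).card := by
  have h1 : (range (X / 4)).card ≤ (dQ X).card := by
    refine Finset.card_le_card_of_injOn (fun k => 4 * k + 1) ?_ ?_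
    · intro k hk
      simp only [Finset.coe_range, Set.mem_Iio] at hk
      simp only [dQ, Finset.coe_filter, Finset.mem_Icc, Set.mem_ofPred_eq]
      omega
    · intro a _ b _ h
      simp only at h
      omega
  rw [Finset.card_range] at h1
  have h2 : (X:ℝ) ≤ 4 * ((X / 4 : ℕ) : ℝ) + 4 := by
    have : X ≤ 4 * (X / 4) + 4 := by omega
    exact_mod_cast this
  have h3 : ((X / 4 : ℕ) : ℝ) ≤ (dQ X).card := by exact_mod_cast h1
  linarith

open scoped Classical in
lemma dn_good (X : ℕ) (hX : 0 < X) : ((X:ℝ) / 4 - 1) * (64 / 63) - 1 - (X / 4 * 12.6 + X * ∑' t, dF t * de X t) / 63 ≤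
    (((Finset.Icc 1 X).filter (fun q => q % 4 = 1 ∧ ErdosConjectureHolds q)).card : ℝ) := by
  have h1 : (((Finset.Icc 1 X).filter (fun q => q % 4 = 1 ∧ ErdosConjectureHolds q)).card : ℝ) =
      ∑ q ∈ dQ X, if ErdosConjectureHolds q then (1:ℝ) else 0 := by
    rw [← Finset.filter_filter, Finset.sum_boole]
    rfl
  have h2 : ∀ q ∈ dQ X, (64 / 63 : ℝ) - ((q:ℝ) / q.totient) ^ 6 / 63 - (if q = 1 then 1 else 0) ≤
      if ErdosConjectureHolds q then (1:ℝ) else 0 := by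
    intro q hq
    simp only [dQ, Finset.mem_filter, Finset.mem_Icc] at hq
    have hφ : (0:ℝ) < q.totient := by exact_mod_cast Nat.totient_pos.2 (by omega)
    have h3 : 1 ≤ (q:ℝ) / q.totient := by
      rw [le_div_iff₀ hφ, one_mul]
      exact_mod_cast Nat.totient_le q
    have h4 := one_le_pow₀ h3 (n := 6)
    by_cases hq1 : q = 1
    · rw [if_pos hq1]
      split_ifs <;> linarith
    · rw [if_neg hq1]
      split_ifs with hh
      · linarith
      · have h5 := er_main q (by omega) (not_not.1 hh)
        have h6 := pow_le_pow_left₀ (by norm_num) h5 6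
        norm_num at h6 ⊢
        linarith
  have h3 := Finset.sum_le_sum h2
  rw [Finset.sum_sub_distrib, Finset.sum_sub_distrib, Finset.sum_const, nsmul_eq_mul, ← Finset.sum_div] at h3
  have h4 := dn_moment X hX
  have h5 := dn_card X
  have h6 : (∑ q ∈ dQ X, if q = 1 then (1:ℝ) else 0) ≤ 1 := by
    rw [Finset.sum_ite_eq']
    split_ifs <;> norm_num
  rw [h1]
  linarith

open scoped Classical in
theorem erdos_true_density_80 :
    0.80 ≤ atTop.liminf (fun X : ℕ =>
      (((Finset.Icc 1 X).filter
        (fun q => q % 4 = 1 ∧ ErdosConjectureHolds q)).card : ℝ) / ((X : ℝ) / 4)) := by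
  have hco : IsCoboundedUnder (· ≥ ·) atTop (fun X : ℕ =>
      (((Finset.Icc 1 X).filter
        (fun q => q % 4 = 1 ∧ ErdosConjectureHolds q)).card : ℝ) / ((X : ℝ) / 4)) := by
    refine IsBoundedUnder.isCoboundedUnder_ge ⟨4, ?_⟩
    rw [eventually_map]
    filter_upwards [eventually_gt_atTop 0] with X hX
    have hX' : (0:ℝ) < X := by exact_mod_cast hX
    rw [div_le_iff₀ (by positivity)]
    have : (((Finset.Icc 1 X).filter
        (fun q => q % 4 = 1 ∧ ErdosConjectureHolds q)).card : ℝ) ≤ X := by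
      have := Finset.card_filter_le (Finset.Icc 1 X) (fun q => q % 4 = 1 ∧ ErdosConjectureHolds q)
      rw [Nat.card_Icc] at this
      exact_mod_cast this
    linarith
  refine le_liminf_of_le hco ?_
  have h1 := de_tendsto.eventually (gt_mem_nhds (show (0:ℝ) < 1/100 by norm_num))
  filter_upwards [h1, eventually_gt_atTop 1000] with X h1 hX
  have hX' : (1000:ℝ) < X := by exact_mod_cast hX
  rw [le_div_iff₀ (by positivity)]
  refine le_trans ?_ (dn_good X (by omega))
  have h2 : X * ∑' t, dF t * de X t ≤ X * (1/100) := mul_le_mul_of_nonneg_left h1.le (by positivity)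
  linarith
end

section
/- Let q be a positive integer and f : ℕ → ℝ a function that is periodic with period q. Then the series Σ_{n≥1} f(n)/n converges (i.e., the partial sums Σ_{n=1}^N f(n)/n converge as N → ∞) if and only if Σ_{n=1}^q f(n) = 0. -/
open Filter Topology Finset

lemma aux_conv (q : ℕ) (hq : 0 < q) (h : ℕ → ℝ) (hper : ∀ n, h (n + q) = h n)
    (hs : ∑ i ∈ range q, h i = 0) :
    ∃ L : ℝ, Tendsto (fun N : ℕ => ∑ i ∈ range N, 1 / ((i : ℝ) + 1) * h i) atTop (nhds L) := by
  have hS : Function.Periodic (fun n => ∑ i ∈ range n, h i) q := by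
    intro n
    induction n with
    | zero => simpa using hs
    | succ n ih =>
      simp only at ih ⊢
      rw [show n + 1 + q = (n + q) + 1 by ring, sum_range_succ, sum_range_succ, ih, hper]
  have hb : ∀ n, ‖∑ i ∈ range n, h i‖ ≤ ∑ j ∈ range q, ‖∑ i ∈ range j, h i‖ := by
    intro n
    have h1 := hS.map_mod_nat n
    rw [← h1]
    exact single_le_sum (f := fun j => ‖∑ i ∈ range j, h i‖) (fun _ _ => norm_nonneg _)
      (mem_range.2 (Nat.mod_lt n hq))
  have ha : Antitone (fun n : ℕ => 1 / ((n : ℝ) + 1)) := by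
    intro a b hab
    exact Nat.one_div_le_one_div hab
  exact cauchySeq_tendsto_of_complete
    (ha.cauchySeq_series_mul_of_tendsto_zero_of_bounded
      tendsto_one_div_add_atTop_nhds_zero_nat hb)

lemma aux_Icc (F : ℕ → ℝ) (N : ℕ) : ∑ n ∈ Finset.Icc 1 N, F n = ∑ i ∈ range N, F (i + 1) := by
  induction N with
  | zero => simp
  | succ n ih => rw [sum_range_succ, ← ih, sum_Icc_succ_top (by omega)]

theorem periodic_sum_converges_iff (q : ℕ) (hq : 0 < q) (f : ℕ → ℝ)
    (hper : ∀ n : ℕ, 1 ≤ n → f (n + q) = f n) :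
    (∃ L : ℝ, Tendsto (fun N : ℕ => ∑ n ∈ Finset.Icc 1 N, f n / n) atTop (nhds L)) ↔
      ∑ n ∈ Finset.Icc 1 q, f n = 0 := by
  have hg : ∀ n, f (n + q + 1) = f (n + 1) := fun n => by
    rw [← hper (n + 1) (by omega)]; congr 1; ring
  have hq' : (q : ℝ) ≠ 0 := by positivity
  simp only [aux_Icc]
  constructor
  · rintro ⟨L, hL⟩
    by_contra hne
    set s := ∑ i ∈ range q, f (i + 1) with hs
    obtain ⟨M, hM⟩ := aux_conv q hq (fun n => f (n + 1) - s / q)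
      (fun n => by simp only [hg]) (by
        rw [sum_sub_distrib, ← hs]; simp; field_simp; simp)
    have h1 := (hL.sub hM).div_const (s / q)
    have h2 := Real.tendsto_sum_range_one_div_nat_succ_atTop
    refine not_tendsto_nhds_of_tendsto_atTop h2 _ (h1.congr fun N => ?_)
    rw [← sum_sub_distrib, sum_div]
    refine sum_congr rfl fun i _ => ?_
    have : (i : ℝ) + 1 ≠ 0 := by positivity
    push_cast
    field_simp
    ring
  · intro hs
    obtain ⟨L, hL⟩ := aux_conv q hq (fun n => f (n + 1)) hg hs
    refine ⟨L, hL.congr fun N => sum_congr rfl fun i _ => ?_⟩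
    push_cast
    ring
end

section
/- If q is an even positive integer and f : ℕ → ℤ is Erdősian mod q, then Σ_{n=1}^q f(n) ≠ 0; consequently the partial sums Σ_{n=1}^N f(n)/n do not converge, and in particular the Erdős conjecture is true mod q for every even q. -/
open Filter Topology Finset

theorem erd_sum_ne (q : ℕ) (h0 : 0 < q) (heven : Even q) (f : ℕ → ℤ) (hf : IsErdosian q f) :
    ∑ n ∈ Finset.Icc 1 q, f n ≠ 0 := by
  have h : ∀ m : ℕ, m < q → (∑ n ∈ Finset.Icc 1 m, f n) % 2 = (m : ℤ) % 2 := by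
    intro m
    induction m with
    | zero => simp
    | succ m ih =>
      intro hm
      have h1 := ih (by omega)
      rw [Finset.sum_Icc_succ_top (by omega)]
      have h2 := hf.2.1 (m + 1) (by omega) (Nat.not_dvd_of_pos_of_lt (by omega) hm)
      push_cast
      omega
  obtain ⟨r, rfl⟩ : ∃ r, q = r + 1 := ⟨q - 1, by omega⟩
  rw [Finset.sum_Icc_succ_top (by omega), hf.2.2 (r + 1) (by omega) dvd_rfl]
  have h1 := h r (by omega)
  obtain ⟨t, ht⟩ := heven
  omega

theorem erd_kronecker (f : ℕ → ℤ) (L : ℝ)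
    (hL : Tendsto (fun N : ℕ => ∑ n ∈ Finset.Icc 1 N, (f n : ℝ) / n) atTop (nhds L)) :
    Tendsto (fun N : ℕ => (N : ℝ)⁻¹ * ∑ n ∈ Finset.Icc 1 N, (f n : ℝ)) atTop (nhds 0) := by
  have h1 := hL.sub hL.cesaro
  rw [sub_self] at h1
  refine h1.congr' ?_
  filter_upwards [eventually_gt_atTop 0] with N hN
  have h2 : ∀ N : ℕ, ∑ n ∈ Finset.Icc 1 N, (f n : ℝ) =
      N * ∑ n ∈ Finset.Icc 1 N, (f n : ℝ) / n
        - ∑ i ∈ Finset.range N, ∑ n ∈ Finset.Icc 1 i, (f n : ℝ) / n := by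
    intro N
    induction N with
    | zero => simp
    | succ N ih =>
      rw [Finset.sum_range_succ, Finset.sum_Icc_succ_top (by omega),
        Finset.sum_Icc_succ_top (by omega), ih]
      have : ((N : ℝ) + 1) ≠ 0 := by positivity
      push_cast
      field_simp
      ring
  rw [h2 N, mul_sub, ← mul_assoc, inv_mul_cancel₀ (by positivity), one_mul]

theorem erd_period (q : ℕ) (f : ℕ → ℤ) (hf : IsErdosian q f) (k : ℕ) :
    ∑ n ∈ Finset.Icc 1 (k * q), f n = k * ∑ n ∈ Finset.Icc 1 q, f n := by
  have hc : ∀ N : ℕ, ∑ n ∈ Finset.Icc 1 N, f n = ∑ i ∈ Finset.range N, f (i + 1) := by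
    intro N
    induction N with
    | zero => simp
    | succ N ih => rw [Finset.sum_range_succ, Finset.sum_Icc_succ_top (by omega), ih]
  have hp : ∀ k i : ℕ, f (k * q + i + 1) = f (i + 1) := by
    intro k i
    induction k with
    | zero => simp
    | succ k ih =>
      rw [← ih, ← hf.1 (k * q + i + 1) (by omega)]
      congr 1
      ring
  rw [hc, hc]
  induction k with
  | zero => simp
  | succ k ih =>
    rw [Nat.succ_mul, Finset.sum_range_add, ih, Finset.sum_congr rfl (fun i _ => hp k i)]
    push_cast
    ring

theorem erdos_true_even (q : ℕ) (h0 : 0 < q) (heven : Even q) :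
    (∀ f : ℕ → ℤ, IsErdosian q f →
      (∑ n ∈ Finset.Icc 1 q, f n ≠ 0) ∧
      ¬ ∃ L : ℝ, Tendsto (fun N : ℕ => ∑ n ∈ Finset.Icc 1 N, (f n : ℝ) / n)
        atTop (nhds L)) ∧
    ErdosConjectureHolds q := by
  have key : ∀ f : ℕ → ℤ, IsErdosian q f →
      (∑ n ∈ Finset.Icc 1 q, f n ≠ 0) ∧
      ¬ ∃ L : ℝ, Tendsto (fun N : ℕ => ∑ n ∈ Finset.Icc 1 N, (f n : ℝ) / n)
        atTop (nhds L) := by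
    intro f hf
    have hS := erd_sum_ne q h0 heven f hf
    refine ⟨hS, ?_⟩
    rintro ⟨L, hL⟩
    have h1 := erd_kronecker f L hL
    have h2 : Tendsto (fun k : ℕ => (k + 1) * q) atTop atTop :=
      tendsto_atTop_mono (fun k => by nlinarith : ∀ k : ℕ, k ≤ (k + 1) * q) tendsto_id
    have h3 := h1.comp h2
    have h4 : ((fun N : ℕ => (N : ℝ)⁻¹ * ∑ n ∈ Finset.Icc 1 N, (f n : ℝ)) ∘
        fun k : ℕ => (k + 1) * q) = fun _ => ((∑ n ∈ Finset.Icc 1 q, f n : ℤ) : ℝ) / q := by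
      funext k
      have h5 := erd_period q f hf (k + 1)
      have h6 : ∑ n ∈ Finset.Icc 1 ((k + 1) * q), (f n : ℝ)
          = ((k + 1 : ℕ) : ℝ) * ((∑ n ∈ Finset.Icc 1 q, f n : ℤ) : ℝ) := by
        exact_mod_cast h5
      have hq : (q : ℝ) ≠ 0 := by positivity
      have hk : ((k : ℝ) + 1) ≠ 0 := by positivity
      simp only [Function.comp_apply, h6]
      rw [Nat.cast_mul]
      push_cast
      field_simp
    rw [h4] at h3
    have h7 := tendsto_nhds_unique h3 tendsto_const_nhds
    have hq : (q : ℝ) ≠ 0 := by positivity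
    have h8 : ((∑ n ∈ Finset.Icc 1 q, f n : ℤ) : ℝ) = 0 := by
      rcases div_eq_zero_iff.mp h7.symm with h | h
      · exact h
      · exact absurd h hq
    exact hS (by exact_mod_cast h8)
  refine ⟨key, ?_⟩
  rintro ⟨f, hf, h⟩
  exact (key f hf).2 ⟨0, h⟩
end
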